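/- arXiv:math/0402442 — 3 statements merged into one kernel-verified Lean document; each statement's English description precedes it below -/
import Mathlib

section
/- Let P be a Polish space and let X ⊆ P be an analytic set such that the subspace X is countable dense homogeneous. Then X is completely Baire, i.e., every closed subspace of the subspace X is a Baire space. -/
/-- A topological space is countable dense homogeneous (CDH) if for any two countable
dense subsets `D`, `D'` there is a self-homeomorphism taking `D` onto `D'`. -/
def IsCDH (X : Type*) [TopologicalSpace X] : Prop :=
  ∀ D D' : Set X, D.Countable → Dense D → D'.Countable → Dense D' →
    ∃ h : X ≃ₜ X, h '' D = D'

/-!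
Let `U` be the largest meagre open subset of `X`. It is invariant under homeomorphisms, and some
countable dense subset of `U` is a `Gδ`; by countable dense homogeneity every countable subset
of `U` is then a `Gδ`. For an analytic set this forces `U` to be countable, and moving a countable
dense set containing `U` onto the same set with one point of `U` removed shows `U = ∅`.

So `X` is non-meagre at each of its points, and as analytic sets have the property of Baire, `X`
contains a dense `Gδ` set `G` of its completion. Given a closed `F ⊆ X`, move a countable dense
subset of `X` that lies in `G` onto one whose trace on `F` is dense in `F`. The image of `G` is
a `Gδ` of a completion of `X` that meets `F` in a dense set, whence `F` is Baire.
-/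

open Set Filter Topology TopologicalSpace MeasureTheory

section MeagreLocus

variable {X Y : Type*} [TopologicalSpace X] [TopologicalSpace Y] {A : Set X}

/-- The union of all open sets in which `A` is meagre. Its complement is the set of points at which
`A` is of the second category, Kuratowski's `D(A)`. For `A = univ` it is the largest meagre open
subset of a hereditarily Lindelöf space. -/
def meagreLocus (A : Set X) : Set X :=
  {x | ∃ V ∈ 𝓝 x, IsMeagre (V ∩ A)}

lemma isOpen_meagreLocus (A : Set X) : IsOpen (meagreLocus A) := by
  refine isOpen_iff_mem_nhds.2 fun x ⟨V, hV, hVA⟩ => ?_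
  filter_upwards [eventually_mem_nhds_iff.2 hV] with y hy using ⟨V, hy, hVA⟩

lemma subset_meagreLocus_of_isOpen {V : Set X} (hV : IsOpen V) (hVA : IsMeagre (V ∩ A)) :
    V ⊆ meagreLocus A :=
  fun _ hx => ⟨V, hV.mem_nhds hx, hVA⟩

lemma isMeagre_meagreLocus_inter [HereditarilyLindelofSpace X] (A : Set X) :
    IsMeagre (meagreLocus A ∩ A) := by
  refine (HereditarilyLindelofSpace.isLindelof (meagreLocus A)).induction_on
    (p := fun V => IsMeagre (V ∩ A)) (fun V W hVW hW => hW.mono (inter_subset_inter_left A hVW))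
    (fun S hS hSA => ?_) fun x ⟨V, hV, hVA⟩ => ⟨V, mem_nhdsWithin_of_mem_nhds hV, hVA⟩
  rw [sUnion_eq_biUnion, iUnion₂_inter]
  exact isMeagre_biUnion hS hSA

lemma compl_closure_subset_meagreLocus (A : Set X) : (closure A)ᶜ ⊆ meagreLocus A :=
  subset_meagreLocus_of_isOpen isClosed_closure.isOpen_compl <| by
    rw [(disjoint_compl_left.mono_right subset_closure).inter_eq]
    exact .empty

lemma isMeagre_frontier_of_isClosed {C : Set X} (hC : IsClosed C) : IsMeagre (frontier C) :=
  (isClosed_frontier.isNowhereDense_iff.2 (interior_frontier hC)).isMeagre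

lemma isMeagre_closure_meagreLocus_inter [HereditarilyLindelofSpace X] (A : Set X) :
    IsMeagre (closure (meagreLocus A) ∩ A) := by
  have hfr : IsMeagre (frontier (meagreLocus A)) := by
    simpa only [frontier_compl] using
      isMeagre_frontier_of_isClosed (isOpen_meagreLocus A).isClosed_compl
  refine ((isMeagre_meagreLocus_inter A).union hfr).mono ?_
  rw [closure_eq_self_union_frontier, union_inter_distrib_right]
  exact union_subset_union_right _ inter_subset_left

lemma isMeagre_iInter_meagreLocus_sdiff [HereditarilyLindelofSpace X] {ι : Type*} [Countable ι]
    (A : ι → Set X) : IsMeagre ((⋂ n, meagreLocus (A n)) \ meagreLocus (⋃ n, A n)) := by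
  set K : Set X := ⋂ n, closure (meagreLocus (A n))
  have hK : IsClosed K := isClosed_iInter fun _ => isClosed_closure
  have hKA : interior K ⊆ meagreLocus (⋃ n, A n) := by
    refine subset_meagreLocus_of_isOpen isOpen_interior ?_
    rw [inter_iUnion]
    exact isMeagre_iUnion fun n => (isMeagre_closure_meagreLocus_inter (A n)).mono <|
      inter_subset_inter_left _ (interior_subset.trans (iInter_subset _ n))
  refine (isMeagre_frontier_of_isClosed hK).mono ?_
  rw [hK.frontier_eq]
  exact sdiff_subset_sdiff (iInter_mono fun _ => subset_closure) hKA

lemma preimage_meagreLocus_subset {f : X → Y} (hf : Continuous f)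
    (hres : Tendsto f (residual X) (residual Y)) (A : Set Y) :
    f ⁻¹' meagreLocus A ⊆ meagreLocus (f ⁻¹' A) :=
  fun _ ⟨V, hV, hVA⟩ => ⟨f ⁻¹' V, hf.continuousAt hV, hres hVA⟩

lemma preimage_meagreLocus_univ_subset (h : X ≃ₜ Y) :
    h ⁻¹' meagreLocus univ ⊆ meagreLocus univ :=
  preimage_meagreLocus_subset h.continuous
    (tendsto_residual_of_isOpenMap h.continuous h.isOpenMap) univ

lemma preimage_meagreLocus_univ (h : X ≃ₜ Y) : h ⁻¹' meagreLocus univ = meagreLocus univ := by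
  refine (preimage_meagreLocus_univ_subset h).antisymm fun x hx => ?_
  exact preimage_meagreLocus_univ_subset h.symm (by rwa [mem_preimage, h.symm_apply_apply])

end MeagreLocus

section Analytic

/-- The sequences whose initial segment, listed from its last term to its first as in
`PiNat.res`, is `s`. -/
def baireCylinder (s : List ℕ) : Set (ℕ → ℕ) :=
  {x | PiNat.res x s.length = s}

lemma baireCylinder_nil : baireCylinder [] = univ :=
  eq_univ_of_forall fun _ => rfl

lemma baireCylinder_res (x : ℕ → ℕ) (n : ℕ) :
    baireCylinder (PiNat.res x n) = PiNat.cylinder x n := by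
  rw [PiNat.cylinder_eq_res, baireCylinder, PiNat.res_length]

lemma iUnion_baireCylinder_cons (s : List ℕ) : ⋃ n, baireCylinder (n :: s) = baireCylinder s := by
  ext x
  simp [baireCylinder]

lemma exists_forall_res {α : Type*} {p : List α → Prop} (hnil : p [])
    (hcons : ∀ s, p s → ∃ a, p (a :: s)) : ∃ σ : ℕ → α, ∀ n, p (PiNat.res σ n) := by
  have : Nonempty α := (hcons [] hnil).nonempty
  choose! a ha using hcons
  let L : ℕ → List α := fun n => n.rec [] fun _ s => a s :: s
  have hL (n : ℕ) : PiNat.res (fun k => a (L k)) n = L n := by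
    induction n with
    | zero => rfl
    | succ n ih => rw [PiNat.res_succ, ih]
  refine ⟨fun k => a (L k), fun n => ?_⟩
  rw [hL]
  induction n with
  | zero => exact hnil
  | succ n ih => exact ha _ ih

lemma eq_of_forall_mem_closure_image_cylinder {Z : Type*} [TopologicalSpace Z] [T2Space Z]
    {f : (ℕ → ℕ) → Z} {σ : ℕ → ℕ} (hf : ContinuousAt f σ) {z : Z}
    (hz : ∀ n, z ∈ closure (f '' PiNat.cylinder σ n)) : f σ = z := by
  have hcluster : ClusterPt z (map f (𝓝 σ)) := by
    refine clusterPt_iff_forall_mem_closure.2 fun V hV => ?_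
    obtain ⟨_, ⟨x, n, rfl⟩, hσ, hn⟩ :=
      (PiNat.isTopologicalBasis_cylinders fun _ : ℕ => ℕ).mem_nhds_iff.1 hV
    rw [← PiNat.mem_cylinder_iff_eq.1 hσ] at hn
    exact closure_mono (image_subset_iff.2 hn) (hz n)
  exact (eq_of_nhds_neBot (hcluster.mono hf)).symm

/-- Nikodym's theorem that analytic sets have the property of Baire: with
`isMeagre_meagreLocus_inter` it says that `A` differs from the closed set `(meagreLocus A)ᶜ` by
a meagre set. -/
lemma isMeagre_compl_meagreLocus_sdiff {Z : Type*} [TopologicalSpace Z] [T2Space Z]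
    [HereditarilyLindelofSpace Z] {A : Set Z} (hA : AnalyticSet A) :
    IsMeagre ((meagreLocus A)ᶜ \ A) := by
  rw [AnalyticSet] at hA
  obtain rfl | ⟨f, hf, rfl⟩ := hA
  · have hlocus : meagreLocus (∅ : Set Z) = univ := univ_subset_iff.1 <| by
      simpa only [closure_empty, compl_empty] using compl_closure_subset_meagreLocus (∅ : Set Z)
    rw [hlocus, compl_univ, empty_sdiff]
    exact .empty
  let B (s : List ℕ) : Set Z := f '' baireCylinder s
  have hB (s : List ℕ) : ⋃ n, B (n :: s) = B s := by
    rw [← image_iUnion, iUnion_baireCylinder_cons]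
  refine (isMeagre_iUnion fun s => isMeagre_iInter_meagreLocus_sdiff fun n => B (n :: s)).mono ?_
  rintro z ⟨hz, hzf⟩
  by_contra hgeneric
  have hstep (s : List ℕ) (hs : z ∉ meagreLocus (B s)) : ∃ n, z ∉ meagreLocus (B (n :: s)) := by
    by_contra! hall
    exact hgeneric (mem_iUnion.2 ⟨s, mem_iInter.2 hall, by rwa [hB]⟩)
  obtain ⟨σ, hσ⟩ := exists_forall_res (p := fun s => z ∉ meagreLocus (B s))
    (by simpa only [B, baireCylinder_nil, image_univ, mem_compl_iff] using hz) hstep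
  refine hzf ⟨σ, eq_of_forall_mem_closure_image_cylinder hf.continuousAt fun n => ?_⟩
  by_contra hzn
  rw [← baireCylinder_res] at hzn
  exact hσ n (compl_closure_subset_meagreLocus _ hzn)

variable {X Y : Type*} [TopologicalSpace X] [TopologicalSpace Y]

lemma analyticSet_univ_subtype {A : Set X} (hA : AnalyticSet A) :
    AnalyticSet (univ : Set A) := by
  obtain ⟨Y, _, _, f, hf, rfl⟩ := analyticSet_iff_exists_polishSpace_range.1 hA
  rw [← rangeFactorization_surjective.range_eq]
  exact analyticSet_range_of_polishSpace (hf.subtype_mk _)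

lemma secondCountableTopology_of_analyticSet_univ [PseudoMetrizableSpace X]
    (hX : AnalyticSet (univ : Set X)) : SecondCountableTopology X := by
  obtain ⟨Y, _, _, f, hf, hfX⟩ := analyticSet_iff_exists_polishSpace_range.1 hX
  have := (range_eq_univ.1 hfX).denseRange.separableSpace hf
  let := pseudoMetrizableSpacePseudoMetric X
  exact UniformSpace.secondCountable_of_separable X

lemma analyticSet_of_isOpen_of_analyticSet_univ (hX : AnalyticSet (univ : Set X)) {U : Set X}
    (hU : IsOpen U) : AnalyticSet U := by
  obtain ⟨Y, _, _, f, hf, hfX⟩ := analyticSet_iff_exists_polishSpace_range.1 hX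
  rw [← image_preimage_eq U (range_eq_univ.1 hfX)]
  exact (hU.preimage hf).analyticSet_image hf

lemma exists_nonempty_interior_preimage_singleton [T1Space X] [BaireSpace Y] [SeparableSpace Y]
    [Nonempty Y] {g : Y → X} (hg : Continuous g)
    (hGδ : ∀ B ⊆ range g, B.Countable → IsGδ B) : ∃ a, (interior (g ⁻¹' {a})).Nonempty := by
  obtain ⟨E, hEc, hEd⟩ := exists_countable_dense Y
  have hE : IsGδ (g ⁻¹' (g '' E)) := (hGδ _ (image_subset_range g E) (hEc.image g)).preimage hg
  obtain ⟨y, hy⟩ := (hE.dense_biUnion_interior_of_closed (f := fun a => g ⁻¹' {a})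
    (hEd.mono (subset_preimage_image g E)) (hEc.image g)
    (fun a _ => isClosed_singleton.preimage hg) fun y hy => mem_biUnion hy rfl).nonempty
  obtain ⟨a, -, ha⟩ := mem_iUnion₂.1 hy
  exact ⟨a, y, ha⟩

lemma countable_range_of_forall_isGδ [T1Space X] [PolishSpace Y] {g : Y → X} (hg : Continuous g)
    (hGδ : ∀ B ⊆ range g, B.Countable → IsGδ B) : (range g).Countable := by
  let W : Set Y := {y | ∃ V ∈ 𝓝 y, (g '' V).Countable}
  have hWo : IsOpen W := by
    refine isOpen_iff_mem_nhds.2 fun y ⟨V, hV, hgV⟩ => ?_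
    filter_upwards [eventually_mem_nhds_iff.2 hV] with x hx using ⟨V, hx, hgV⟩
  have hWc : (g '' W).Countable := by
    refine (HereditarilyLindelofSpace.isLindelof W).induction_on
      (p := fun V => (g '' V).Countable) (fun V V' hV hV' => hV'.mono (image_mono hV))
      (fun S hS hSc => ?_) fun y ⟨V, hV, hgV⟩ => ⟨V, mem_nhdsWithin_of_mem_nhds hV, hgV⟩
    rw [sUnion_eq_biUnion, image_iUnion₂]
    exact hS.biUnion hSc
  suffices hW : W = univ by rwa [hW, image_univ] at hWc
  by_contra hne
  have : Nonempty ↥Wᶜ := (nonempty_compl.2 hne).to_subtype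
  have : PolishSpace ↥Wᶜ := hWo.isClosed_compl.polishSpace
  obtain ⟨a, c, hc⟩ := exists_nonempty_interior_preimage_singleton (g := fun c : ↥Wᶜ => g c)
    (hg.comp continuous_subtype_val)
    fun B hB => hGδ B (hB.trans (range_comp_subset_range Subtype.val g))
  obtain ⟨V, hV, hVa⟩ := mem_nhds_subtype _ _ _ |>.1 (mem_interior_iff_mem_nhds.1 hc)
  refine c.2 ⟨V, hV, (hWc.union (countable_singleton a)).mono ?_⟩
  rintro _ ⟨y, hyV, rfl⟩
  by_cases hyW : y ∈ W
  · exact .inl (mem_image_of_mem g hyW)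
  · exact .inr (hVa (show (⟨y, hyW⟩ : ↥Wᶜ) ∈ Subtype.val ⁻¹' V from hyV))

lemma countable_of_analyticSet_of_forall_isGδ [T1Space X] {A : Set X} (hA : AnalyticSet A)
    (hGδ : ∀ B ⊆ A, B.Countable → IsGδ B) : A.Countable := by
  obtain ⟨Y, _, _, g, hg, rfl⟩ := analyticSet_iff_exists_polishSpace_range.1 hA
  exact countable_range_of_forall_isGδ hg hGδ

end Analytic

section CountableDense

variable {X : Type*} [TopologicalSpace X]

lemma exists_antitone_isOpen_dense_of_isMeagre {A : Set X} (hA : IsMeagre A) :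
    ∃ O : ℕ → Set X, Antitone O ∧ (∀ n, IsOpen (O n)) ∧ (∀ n, Dense (O n)) ∧
      Disjoint A (⋂ n, O n) := by
  obtain ⟨S, hSo, hSd, hSc, hSA⟩ := mem_residual_iff.1 hA
  obtain ⟨T, hT⟩ := (hSc.insert univ).exists_eq_range (insert_nonempty _ _)
  have hTod (n : ℕ) : IsOpen (T n) ∧ Dense (T n) := by
    obtain hn | hn : T n ∈ insert univ S := hT ▸ mem_range_self n
    · exact hn ▸ ⟨isOpen_univ, dense_univ⟩
    · exact ⟨hSo _ hn, hSd _ hn⟩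
  have hod (n : ℕ) : IsOpen (dissipate T n) ∧ Dense (dissipate T n) := by
    induction n with
    | zero => simpa only [dissipate_zero_nat] using hTod 0
    | succ n ih =>
      rw [dissipate_succ]
      exact ⟨ih.1.inter (hTod _).1, ih.2.inter_of_isOpen_left (hTod _).2 ih.1⟩
  refine ⟨dissipate T, antitone_dissipate, fun n => (hod n).1, fun n => (hod n).2, ?_⟩
  rw [iInter_dissipate, ← sInter_range, ← hT, sInter_insert, univ_inter]
  exact disjoint_left.2 fun x hxA hxS => hSA hxS hxA

lemma isGδ_of_finite_sdiff [T1Space X] [FirstCountableTopology X] {D U : Set X} {G : ℕ → Set X}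
    (hDU : D ⊆ U) (hU : IsGδ U) (hG : ∀ n, IsGδ (G n)) (hUG : Disjoint U (⋂ n, G n))
    (hfin : ∀ n, (D \ G n).Finite) : IsGδ D := by
  have hD : D = U ∩ ⋂ n, (G n ∪ D \ G n) := by
    refine Subset.antisymm (subset_inter hDU (subset_iInter fun n => ?_)) fun x ⟨hxU, hx⟩ => ?_
    · rw [union_sdiff_self]
      exact subset_union_right
    · obtain ⟨n, hn⟩ : ∃ n, x ∉ G n := by
        simpa only [mem_iInter, not_forall] using disjoint_left.1 hUG hxU
      exact ((mem_iInter.1 hx n).resolve_left hn).1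
  rw [hD]
  exact hU.inter (.iInter fun n => (hG n).union (hfin n).isGδ)

lemma exists_countable_isGδ_subset_closure [T1Space X] [SecondCountableTopology X] {U : Set X}
    (hUo : IsOpen U) (hU : IsMeagre U) :
    ∃ D ⊆ U, D.Countable ∧ IsGδ D ∧ U ⊆ closure D := by
  obtain ⟨O, hO, hOo, hOd, hUO⟩ := exists_antitone_isOpen_dense_of_isMeagre hU
  let I : Set (Set X) := {v ∈ countableBasis X | (v ∩ U).Nonempty}
  have hI : Countable I := ((countable_countableBasis X).mono (sep_subset _ _)).to_subtype
  obtain ⟨e, he⟩ := exists_injective_nat I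
  have hmeet (v : I) : ((v ∩ U : Set X) ∩ O (e v)).Nonempty :=
    (hOd _).inter_open_nonempty _ ((isOpen_of_mem_countableBasis v.2.1).inter hUo) v.2.2
  choose d hd using hmeet
  have hdU : range d ⊆ U := range_subset_iff.2 fun v => (hd v).1.2
  have hfin (n : ℕ) : (range d \ O n).Finite := by
    refine (((finite_lt_nat n).preimage he.injOn).image d).subset ?_
    rintro _ ⟨⟨v, rfl⟩, hv⟩
    exact mem_image_of_mem d (not_le.1 fun hn => hv (hO hn (hd v).2))
  refine ⟨range d, hdU, countable_range d,
    isGδ_of_finite_sdiff hdU hUo.isGδ (fun n => (hOo n).isGδ) hUO hfin, fun x hx => ?_⟩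
  refine (isBasis_countableBasis X).mem_closure_iff.2 fun v hv hxv => ?_
  let v' : I := ⟨v, hv, x, hxv, hx⟩
  exact ⟨d v', (hd v').1.1, mem_range_self v'⟩

lemma not_isOpen_singleton_of_isMeagre {x : X} (hx : IsMeagre {x}) : ¬ IsOpen {x} := by
  intro hxo
  obtain ⟨S, hS, -, hxS⟩ := isMeagre_iff_countable_union_isNowhereDense.1 hx
  obtain ⟨t, ht, hxt⟩ := hxS (mem_singleton x)
  have hx_int : x ∈ interior (closure t) :=
    interior_maximal (singleton_subset_iff.2 (subset_closure hxt)) hxo (mem_singleton x)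
  rwa [hS t ht] at hx_int

end CountableDense

namespace IsCDH

variable {X : Type*} [TopologicalSpace X] [T1Space X]

lemma isGδ_inter_meagreLocus_univ [SecondCountableTopology X] (hX : IsCDH X) {D : Set X}
    (hDc : D.Countable) (hDd : Dense D) : IsGδ (D ∩ meagreLocus univ) := by
  set U : Set X := meagreLocus univ
  obtain ⟨D₀, hD₀U, hD₀c, hD₀, hUD₀⟩ := exists_countable_isGδ_subset_closure
    (isOpen_meagreLocus (univ : Set X))
    (by simpa only [inter_univ] using isMeagre_meagreLocus_inter (univ : Set X))
  have hdense : Dense (D₀ ∪ D \ U) := by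
    refine dense_closure.1 (hDd.mono fun x hx => ?_)
    by_cases hxU : x ∈ U
    · exact closure_mono subset_union_left (hUD₀ hxU)
    · exact subset_closure (.inr ⟨hx, hxU⟩)
  obtain ⟨h, hh⟩ := hX _ D (hD₀c.union (hDc.mono sdiff_subset)) hdense hDc hDd
  have hDU : D ∩ U = h '' D₀ := by
    rw [← hh, ← image_inter_preimage, preimage_meagreLocus_univ h, union_inter_distrib_right,
      sdiff_inter_self, union_empty, inter_eq_left.2 hD₀U]
  rw [hDU, h.image_eq_preimage_symm]
  exact hD₀.preimage h.symm.continuous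

lemma isGδ_of_countable_subset_meagreLocus_univ [SecondCountableTopology X] (hX : IsCDH X)
    {B : Set X} (hBc : B.Countable) (hB : B ⊆ meagreLocus univ) : IsGδ B := by
  obtain ⟨C, hCc, hCd⟩ := exists_countable_dense X
  have hBC : B = (B ∪ C) ∩ meagreLocus univ ∩ (C \ B)ᶜ := by
    ext x
    have := @hB x
    simp only [mem_inter_iff, mem_union, mem_compl_iff, Set.mem_sdiff]
    tauto
  rw [hBC]
  exact (hX.isGδ_inter_meagreLocus_univ (hBc.union hCc) (hCd.mono subset_union_right)).inter
    (hCc.mono sdiff_subset).isGδ_compl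

lemma meagreLocus_univ_eq_empty_of_countable [SeparableSpace X] (hX : IsCDH X)
    (hU : (meagreLocus (univ : Set X)).Countable) : meagreLocus (univ : Set X) = ∅ := by
  refine eq_empty_of_forall_notMem fun x hx => ?_
  obtain ⟨C, hCc, hCd⟩ := exists_countable_dense X
  have hUCc := hU.union hCc
  have hUCd : Dense (meagreLocus univ ∪ C) := hCd.mono subset_union_right
  have hx_acc : NeBot (𝓝[≠] x) := by
    obtain ⟨V, hV, hVm⟩ := hx
    rw [inter_univ] at hVm
    exact ⟨mt (isOpen_singleton_iff_punctured_nhds x).2 <| not_isOpen_singleton_of_isMeagre <|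
      hVm.mono (singleton_subset_iff.2 (mem_of_mem_nhds hV))⟩
  obtain ⟨h, hh⟩ := hX _ ((meagreLocus univ ∪ C) \ {x}) hUCc hUCd (hUCc.mono sdiff_subset)
    (hUCd.sdiff_singleton x)
  have hy : h.symm x ∈ meagreLocus univ := by
    rwa [← mem_preimage, preimage_meagreLocus_univ h.symm]
  have hx' : x ∈ (meagreLocus univ ∪ C) \ {x} := hh ▸ ⟨h.symm x, .inl hy, h.apply_symm_apply x⟩
  exact hx'.2 rfl

theorem meagreLocus_univ_eq_empty [SecondCountableTopology X] (hX : IsCDH X)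
    (hA : AnalyticSet (univ : Set X)) : meagreLocus (univ : Set X) = ∅ :=
  hX.meagreLocus_univ_eq_empty_of_countable <|
    countable_of_analyticSet_of_forall_isGδ
      (analyticSet_of_isOpen_of_analyticSet_univ hA (isOpen_meagreLocus univ))
      fun _ hB hBc => hX.isGδ_of_countable_subset_meagreLocus_univ hBc hB

end IsCDH

section Inducing

variable {X Z : Type*} [TopologicalSpace X] [TopologicalSpace Z] {i : X → Z}

lemma dense_preimage_of_dense_inter_range (hi : IsInducing i) {s : Set Z}
    (hs : Dense (s ∩ range i)) : Dense (i ⁻¹' s) :=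
  hi.dense_iff.2 fun x => by simpa only [image_preimage_eq_inter_range] using hs (i x)

lemma tendsto_residual_of_isDenseInducing (hi : IsDenseInducing i) :
    Tendsto i (residual X) (residual Z) := by
  refine le_countableGenerate_iff_of_countableInterFilter.2 fun t ⟨hto, htd⟩ => ?_
  exact residual_of_dense_open (hto.preimage hi.continuous)
    (dense_preimage_of_dense_inter_range hi.isInducing (htd.inter_of_isOpen_left hi.dense hto))

lemma exists_dense_isGδ_subset_range [T2Space Z] [HereditarilyLindelofSpace Z] [BaireSpace Z]
    (hi : IsDenseInducing i) (hA : AnalyticSet (univ : Set X))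
    (hX : meagreLocus (univ : Set X) = ∅) : ∃ G ⊆ range i, IsGδ G ∧ Dense G := by
  have hlocus : meagreLocus (range i) = ∅ := by
    by_contra hne
    obtain ⟨x, hx⟩ := hi.dense.exists_mem_open (isOpen_meagreLocus _) (nonempty_iff_ne_empty.2 hne)
    have hx' := preimage_meagreLocus_subset hi.continuous
      (tendsto_residual_of_isDenseInducing hi) (range i) hx
    rwa [preimage_range, hX] at hx'
  have hmeagre : IsMeagre ((meagreLocus (range i))ᶜ \ range i) :=
    isMeagre_compl_meagreLocus_sdiff (image_univ (f := i) ▸ hA.image_of_continuous hi.continuous)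
  rw [hlocus, compl_empty, ← compl_eq_univ_sdiff, IsMeagre, compl_compl] at hmeagre
  exact mem_residual.1 hmeagre

lemma baireSpace_of_dense_isGδ_subset_range [BaireSpace Z] (hi : IsInducing i) {G : Set Z}
    (hG : IsGδ G) (hGd : Dense G) (hGi : G ⊆ range i) : BaireSpace X := by
  refine ⟨fun f hfo hfd => ?_⟩
  choose V hVo hVf using fun n => hi.isOpen_iff.1 (hfo n)
  have hi_dense : DenseRange i := hGd.mono hGi
  have hVd (n : ℕ) : Dense (V n) := by
    refine (hi_dense.dense_image hi.continuous (hfd n)).mono ?_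
    rw [← hVf n]
    exact image_preimage_subset i (V n)
  have hVG : Dense ((⋂ n, V n) ∩ G) :=
    (dense_iInter_of_isOpen hVo hVd).inter_of_Gδ (.iInter_of_isOpen hVo) hG hGd
  simp only [← hVf, ← preimage_iInter]
  exact dense_preimage_of_dense_inter_range hi (hVG.mono (inter_subset_inter_right _ hGi))

lemma baireSpace_of_isClosed_of_isInducing [IsCompletelyMetrizableSpace Z] (hi : IsInducing i)
    {G : Set Z} (hG : IsGδ G) (hGi : G ⊆ range i) {F : Set X} (hF : IsClosed F)
    (hFG : F ⊆ closure (F ∩ i ⁻¹' G)) : BaireSpace F := by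
  let C : Set Z := closure (i '' F)
  have : IsCompletelyMetrizableSpace C := isClosed_closure.isCompletelyMetrizableSpace
  let j : F → C := fun y => ⟨i y, subset_closure (mem_image_of_mem i y.2)⟩
  have hj : IsInducing j := (hi.comp IsInducing.subtypeVal).codRestrict _
  refine baireSpace_of_dense_isGδ_subset_range hj (hG.preimage continuous_subtype_val) ?_ ?_
  · have hCG : C ⊆ closure (C ∩ G) := by
      refine closure_minimal ?_ isClosed_closure
      calc i '' F ⊆ i '' closure (F ∩ i ⁻¹' G) := image_mono hFG
        _ ⊆ closure (i '' (F ∩ i ⁻¹' G)) := image_closure_subset_closure_image hi.continuous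
        _ ⊆ closure (C ∩ G) := by
          rw [image_inter_preimage]
          exact closure_mono (inter_subset_inter_left _ subset_closure)
    refine IsInducing.subtypeVal.dense_iff.2 fun c => ?_
    rw [Subtype.image_preimage_coe]
    exact hCG c.2
  · rintro ⟨z, hzC⟩ hzG
    obtain ⟨x, rfl⟩ := hGi hzG
    have hxF : x ∈ F := by rwa [← hF.closure_eq, hi.closure_eq_preimage_closure_image]
    exact ⟨⟨x, hxF⟩, rfl⟩

lemma exists_isDenseInducing_polishSpace.{u} (X : Type u) [TopologicalSpace X]
    [MetrizableSpace X] [SeparableSpace X] :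
    ∃ (Z : Type u) (_ : TopologicalSpace Z) (_ : PolishSpace Z) (i : X → Z), IsDenseInducing i := by
  let := metrizableSpaceMetric X
  exact ⟨UniformSpace.Completion X, inferInstance, inferInstance, (↑),
    UniformSpace.Completion.isDenseInducing_coe⟩

end Inducing

theorem completelyBaire_of_analytic_CDH_general
    (X : Type*) [TopologicalSpace X] [MetrizableSpace X]
    (hA : AnalyticSet (univ : Set X)) (hCDH : IsCDH X) :
    ∀ F : Set X, IsClosed F → BaireSpace F := by
  intro F hF
  have := secondCountableTopology_of_analyticSet_univ hA
  obtain ⟨Z, _, _, i, hi⟩ := exists_isDenseInducing_polishSpace X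
  obtain ⟨G, hGi, hG, hGd⟩ :=
    exists_dense_isGδ_subset_range hi hA (hCDH.meagreLocus_univ_eq_empty hA)
  have hGX : Dense (i ⁻¹' G) :=
    dense_preimage_of_dense_inter_range hi.isInducing (by rwa [inter_eq_left.2 hGi])
  obtain ⟨E, hEG, hEc, hEd⟩ := hGX.exists_countable_dense_subset
  obtain ⟨B, hBF, hBc, hFB⟩ := (IsSeparable.of_separableSpace F).exists_countable_dense_subset
  obtain ⟨h, hh⟩ := hCDH E (B ∪ E) hEc hEd (hBc.union hEc) (hEd.mono subset_union_right)
  have hBG : B ⊆ (i ∘ h.symm) ⁻¹' G := by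
    rw [preimage_comp, ← h.image_eq_preimage_symm]
    exact subset_union_left.trans (hh ▸ image_mono hEG)
  exact baireSpace_of_isClosed_of_isInducing (hi.isInducing.comp h.symm.isInducing) hG
    (by rwa [h.symm.surjective.range_comp]) hF (hFB.trans (closure_mono (subset_inter hBF hBG)))

/-- Every analytic CDH subspace of a Polish space is completely Baire: every closed
subspace of it is a Baire space. -/
theorem completelyBaire_of_analytic_CDH
    (P : Type*) [TopologicalSpace P] [PolishSpace P] (X : Set P)
    (hA : MeasureTheory.AnalyticSet X)
    (hCDH : IsCDH ↥X) :
    ∀ F : Set ↥X, IsClosed F → BaireSpace ↥F :=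
  completelyBaire_of_analytic_CDH_general X (analyticSet_univ_subtype hA) hCDH
end

section
/- Let P be a Polish space and let X ⊆ P be a nonempty Borel set such that the subspace X has no isolated points, has a basis consisting of clopen sets (is zero-dimensional), and is countable dense homogeneous. Then the subspace X is homeomorphic to one of the following five spaces: the Cantor space 2^ℕ, the Baire space ℕ^ℕ, the Cantor space with one point removed 2^ℕ ∖ {0}, the topological sum ℕ^ℕ ⊕ 2^ℕ, or the topological sum ℕ^ℕ ⊕ (2^ℕ ∖ {0}). -/
/-!
Let `U` be the union of the meagre open sets of a Borel CDH space `X`. Some countable dense set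
meets `U` in a Gδ set, hence by homogeneity every one does, and so every countable subset of `U` is
a Gδ set. Uncountable Borel sets contain Cantor sets and therefore countable sets that are not Gδ,
so `U` is countable, hence empty, and `X` is a Baire space. By the Baire property `X` is then
residual in its completion, so it contains a dense Gδ set of the completion, which homogeneity moves
over any prescribed countable subset of `X`. By Hurewicz's criterion `X` is a Gδ set in its
completion, that is, `X` is Polish.

The set of points with a compact neighbourhood is open and invariant, and in a CDH space such a set
is clopen. Brouwer's characterization of the Cantor space identifies this part of `X`, and the
Alexandrov–Urysohn characterization of the Baire space identifies its complement.
-/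

open Set Filter Topology TopologicalSpace MeasureTheory
open scoped Function

/-! ### Gδ sets and Polish spaces -/

section Polish

variable {Q : Type*} [TopologicalSpace Q]

theorem polishSpace_iInter {ι : Type*} [Countable ι] [Nonempty ι] [T2Space Q] {s : ι → Set Q}
    (hs : ∀ i, PolishSpace (s i)) : PolishSpace (⋂ i, s i) := by
  let diag : ↥(⋂ i, s i) → ∀ i, s i := fun x i => ⟨x, mem_iInter.1 x.2 i⟩
  have diag_emb : IsEmbedding diag :=
    .of_comp (g := fun z => (z (Classical.arbitrary ι) : Q)) (by fun_prop) (by fun_prop)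
      IsEmbedding.subtypeVal
  have range_diag : range diag = ⋂ i, ⋂ j, {z | (z i : Q) = z j} := by
    refine Subset.antisymm ?_ fun z hz => ?_
    · rintro _ ⟨x, rfl⟩
      simp [diag]
    · simp only [mem_iInter, mem_ofPred_eq] at hz
      let i₀ := Classical.arbitrary ι
      exact ⟨⟨z i₀, mem_iInter.2 fun i => hz i i₀ ▸ (z i).2⟩,
        funext fun i => Subtype.ext (hz i₀ i)⟩
  have closed_range : IsClosed (range diag) := by
    rw [range_diag]
    exact isClosed_iInter fun i => isClosed_iInter fun j =>
      isClosed_eq (by fun_prop) (by fun_prop)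
  exact (IsClosedEmbedding.mk diag_emb closed_range).polishSpace

theorem polishSpace_of_isGδ [PolishSpace Q] {G : Set Q} (hG : IsGδ G) : PolishSpace G := by
  obtain ⟨O, hO, rfl⟩ := isGδ_iff_eq_iInter_nat.1 hG
  exact polishSpace_iInter fun n => (hO n).polishSpace

-- A point `q` of the closure of `range f` lies in every `O n` iff the trace on `Y` of its
-- neighbourhood filter is Cauchy.
theorem isGδ_range_of_isEmbedding {Y : Type*} [TopologicalSpace Y] [IsCompletelyMetrizableSpace Y]
    [T2Space Q] [PerfectlyNormalSpace Q] {f : Y → Q} (hf : IsEmbedding f) :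
    IsGδ (range f) := by
  let _ := upgradeIsCompletelyMetrizable Y
  let O : ℕ → Set Q := fun n => ⋃₀ {V | IsOpen V ∧
    ∀ x ∈ f ⁻¹' V, ∀ y ∈ f ⁻¹' V, dist x y < 1 / ((n : ℝ) + 1)}
  suffices range f = closure (range f) ∩ ⋂ n, O n by
    rw [this]
    exact isClosed_closure.isGδ.inter
      (IsGδ.iInter_of_isOpen fun n => isOpen_sUnion fun V hV => hV.1)
  refine Subset.antisymm (subset_inter subset_closure (subset_iInter fun n => ?_)) ?_
  · rintro _ ⟨y, rfl⟩
    obtain ⟨V, hV, hVball⟩ := hf.isInducing.isOpen_iff.1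
      (Metric.isOpen_ball (x := y) (ε := 1 / ((n : ℝ) + 1) / 2))
    refine ⟨V, ⟨hV, fun a ha b hb => ?_⟩, ?_⟩
    · rw [hVball, Metric.mem_ball] at ha hb
      linarith [dist_triangle_right a b y]
    · rw [← mem_preimage, hVball]
      exact Metric.mem_ball_self (by positivity)
  · rintro q ⟨hq, hqO⟩
    have cauchy : Cauchy (comap f (𝓝 q)) := by
      refine Metric.cauchy_iff.2
        ⟨comap_neBot_iff_frequently.2 (mem_closure_iff_frequently.1 hq), fun ε hε => ?_⟩
      obtain ⟨n, hn⟩ := exists_nat_one_div_lt hε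
      obtain ⟨V, ⟨hV, hVsmall⟩, hqV⟩ := mem_iInter.1 hqO n
      exact ⟨f ⁻¹' V, preimage_mem_comap (hV.mem_nhds hqV),
        fun x hx y hy => (hVsmall x hx y hy).trans hn⟩
    obtain ⟨y, hy⟩ := CompleteSpace.complete cauchy
    have := cauchy.1
    exact ⟨y, tendsto_nhds_unique ((hf.continuous.tendsto y).mono_left hy) tendsto_comap⟩

end Polish

/-! ### Hurewicz's criterion for Gδ sets -/

section Hurewicz

variable {Q : Type*} [TopologicalSpace Q]

/-- `S` is Gδ-separated from `B` if some Gδ set contains `B` and misses `S`. This is the smallness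
notion of the derivative argument behind Hurewicz's criterion: for fixed `B` the sets separated
from `B` form a σ-ideal. -/
def IsGδSeparated (S B : Set Q) : Prop :=
  ∃ H, IsGδ H ∧ B ⊆ H ∧ Disjoint S H

namespace IsGδSeparated

variable {S T B : Set Q}

theorem mono (hT : IsGδSeparated T B) (hST : S ⊆ T) : IsGδSeparated S B := by
  obtain ⟨H, hH, hBH, hTH⟩ := hT
  exact ⟨H, hH, hBH, hTH.mono_left hST⟩

theorem iUnion {ι : Sort*} [Countable ι] {S : ι → Set Q} (hS : ∀ i, IsGδSeparated (S i) B) :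
    IsGδSeparated (⋃ i, S i) B := by
  choose H hH hBH hSH using hS
  exact ⟨⋂ i, H i, .iInter hH, subset_iInter hBH,
    disjoint_iUnion_left.2 fun i => (hSH i).mono_right (iInter_subset H i)⟩

theorem union (hS : IsGδSeparated S B) (hT : IsGδSeparated T B) : IsGδSeparated (S ∪ T) B := by
  rw [union_eq_iUnion]
  exact iUnion (Bool.forall_bool.2 ⟨hT, hS⟩)

theorem of_disjoint_closure (h : Disjoint (closure S) B) : IsGδSeparated S B :=
  ⟨(closure S)ᶜ, isClosed_closure.isOpen_compl.isGδ, h.subset_compl_left,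
    disjoint_compl_right.mono_left subset_closure⟩

theorem isGδ (h : IsGδSeparated Bᶜ B) : IsGδ B := by
  obtain ⟨H, hH, hBH, hdisj⟩ := h
  rwa [hBH.antisymm (disjoint_compl_left_iff_subset.1 hdisj)]

end IsGδSeparated

theorem exists_isClosed_forall_closure_image_inter_nonempty {Z : Type*} [TopologicalSpace Z]
    [SecondCountableTopology Z] {f : Z → Q} {B : Set Q} (hf : ¬ IsGδSeparated (range f) B) :
    ∃ C : Set Z, IsClosed C ∧ C.Nonempty ∧
      ∀ V, IsOpen V → (C ∩ V).Nonempty → (closure (f '' (C ∩ V)) ∩ B).Nonempty := by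
  let small : Set (Set Z) := {V | IsOpen V ∧ IsGδSeparated (f '' V) B}
  have separated_sUnion : IsGδSeparated (f '' ⋃₀ small) B := by
    obtain ⟨T, hT, hTsmall, hTU⟩ := isOpen_sUnion_countable small fun V hV => hV.1
    have := hT.to_subtype
    rw [← hTU, sUnion_eq_iUnion, image_iUnion]
    exact .iUnion fun V => (hTsmall V.2).2
  refine ⟨(⋃₀ small)ᶜ, (isOpen_sUnion fun V hV => hV.1).isClosed_compl, ?_, fun V hV hVC => ?_⟩
  · rw [nonempty_compl]
    intro h
    rw [h, image_univ] at separated_sUnion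
    exact hf separated_sUnion
  · by_contra hcon
    have separated_V : IsGδSeparated (f '' V) B := by
      refine (IsGδSeparated.of_disjoint_closure (disjoint_iff_inter_eq_empty.2
        (not_nonempty_iff_eq_empty.1 hcon))).union separated_sUnion |>.mono ?_
      rw [← image_union]
      exact image_mono fun z hz => (em (z ∈ ⋃₀ small)).elim .inr fun h => .inl ⟨h, hz⟩
    obtain ⟨z, hz, hzV⟩ := hVC
    exact hz ⟨V, ⟨hV, separated_V⟩, hzV⟩

theorem exists_countable_forall_isGδ_inter_range_nonempty {Z : Type*} [TopologicalSpace Z]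
    [SecondCountableTopology Z] [BaireSpace Z] [Nonempty Z] {f : Z → Q} (hf : Continuous f)
    {B : Set Q}
    (hB : ∀ V : Set Z, IsOpen V → V.Nonempty → (closure (f '' V) ∩ B).Nonempty) :
    ∃ A ⊆ B, A.Countable ∧ ∀ G, IsGδ G → A ⊆ G → (G ∩ range f).Nonempty := by
  have hbasis (V : countableBasis Z) : (closure (f '' V) ∩ B).Nonempty :=
    hB V (isOpen_of_mem_countableBasis V.2) (nonempty_of_mem_countableBasis V.2)
  choose p hp_closure hpB using hbasis
  refine ⟨range p, range_subset_iff.2 hpB, countable_range p, fun G hG hpG => ?_⟩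
  obtain ⟨O, hO, rfl⟩ := isGδ_iff_eq_iInter_nat.1 hG
  have dense_preimage (n : ℕ) : Dense (f ⁻¹' O n) := by
    refine (isBasis_countableBasis Z).dense_iff.2 fun V hV _ => ?_
    obtain ⟨_, hO', z, hz, rfl⟩ := mem_closure_iff.1 (hp_closure ⟨V, hV⟩) (O n) (hO n)
      (mem_iInter.1 (hpG (mem_range_self _)) n)
    exact ⟨z, hz, hO'⟩
  obtain ⟨z, hz⟩ := (dense_iInter_of_isOpen (fun n => (hO n).preimage hf) dense_preimage).nonempty
  exact ⟨f z, by simpa using hz, mem_range_self z⟩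

theorem isGδ_of_analyticSet_compl {B : Set Q} (hB : AnalyticSet Bᶜ)
    (h : ∀ A ⊆ B, A.Countable → ∃ G, IsGδ G ∧ A ⊆ G ∧ G ⊆ B) : IsGδ B := by
  obtain ⟨Z, _, _, f, hf, hfB⟩ := analyticSet_iff_exists_polishSpace_range.1 hB
  by_contra hnot
  obtain ⟨C, hC, hCne, hCB⟩ := exists_isClosed_forall_closure_image_inter_nonempty (f := f) (B := B)
    (hfB ▸ fun hsep => hnot hsep.isGδ)
  have := hC.polishSpace
  have := hCne.to_subtype
  obtain ⟨A, hAB, hA, hAG⟩ :=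
    exists_countable_forall_isGδ_inter_range_nonempty (f := f ∘ Subtype.val)
    (B := B) (hf.comp continuous_subtype_val) fun W hW hWne => by
      obtain ⟨V, hV, rfl⟩ := isOpen_induced_iff.1 hW
      rw [image_comp, Subtype.image_preimage_coe]
      exact hCB V hV (Subtype.preimage_coe_nonempty.1 hWne)
  obtain ⟨G, hG, hAG', hGB⟩ := h A hAB hA
  obtain ⟨_, hxG, c, rfl⟩ := hAG G hG hAG'
  exact (hfB ▸ mem_range_self c.1 : f c ∈ Bᶜ) (hGB hxG)

end Hurewicz

/-! ### Perfect spaces, category and Cantor sets -/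

section Perfect

variable {Y : Type*} [TopologicalSpace Y]

theorem perfectSpace_iff_not_isOpen_singleton :
    PerfectSpace Y ↔ ∀ y : Y, ¬ IsOpen ({y} : Set Y) := by
  simp_rw [perfectSpace_iff_forall_not_isolated, isOpen_singleton_iff_punctured_nhds, neBot_iff]

theorem perfectSpace_subtype_of_isOpen [PerfectSpace Y] {U : Set Y} (hU : IsOpen U) :
    PerfectSpace U := by
  refine perfectSpace_iff_not_isOpen_singleton.2 fun y hy => not_isOpen_singleton (y : Y) ?_
  simpa using hU.isOpenMap_subtype_val _ hy

instance perfectSpace_pi {ι : Type*} [Infinite ι] {X : ι → Type*} [∀ i, TopologicalSpace (X i)]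
    [∀ i, Nontrivial (X i)] : PerfectSpace (∀ i, X i) := by
  classical
  refine perfectSpace_iff_forall_not_isolated.2 fun x => ?_
  choose x' hx' using fun i => exists_ne (x i)
  have tendsto_update : Tendsto (fun i => Function.update x i (x' i)) cofinite (𝓝[≠] x) := by
    refine tendsto_nhdsWithin_iff.2
      ⟨tendsto_pi_nhds.2 fun j => ?_, .of_forall fun i => by simpa using hx' i⟩
    refine tendsto_const_nhds.congr' ?_
    filter_upwards [(finite_singleton j).compl_mem_cofinite] with i hi
    exact (Function.update_of_ne (Ne.symm hi) _ _).symm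
  exact tendsto_update.neBot

theorem isMeagre_of_countable [PerfectSpace Y] [T1Space Y] {s : Set Y} (hs : s.Countable) :
    IsMeagre s := by
  rw [← biUnion_of_singleton s]
  exact isMeagre_biUnion hs fun y _ =>
    (isClosed_singleton.isNowhereDense_iff.2 (interior_singleton y)).isMeagre

theorem not_isGδ_of_countable_of_dense [PerfectSpace Y] [T1Space Y] [BaireSpace Y] [Nonempty Y]
    {s : Set Y} (hs : s.Countable) (hd : Dense s) : ¬ IsGδ s :=
  fun hG => not_isMeagre_of_isGδ_of_dense hG hd (isMeagre_of_countable hs)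

theorem exists_injective_continuous_comp {Z : Type*} [MeasurableSpace Z]
    [StandardBorelSpace Z] [Uncountable Z] [SecondCountableTopology Y] [MeasurableSpace Y]
    [OpensMeasurableSpace Y] {f : Z → Y} (hf : Measurable f) :
    ∃ g : (ℕ → Bool) → Z, Function.Injective g ∧ Continuous (f ∘ g) := by
  obtain ⟨_, _, _⟩ := StandardBorelSpace.polish (α := Z)
  obtain ⟨τ, -, hfτ, _⟩ := hf.exists_continuous
  obtain ⟨g, -, hg, hg_inj⟩ := IsClosed.exists_nat_bool_injection_of_not_countable
    (@isClosed_univ Z τ) not_countable_univ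
  exact ⟨g, hg_inj, hfτ.comp hg⟩

theorem exists_countable_subset_not_isGδ [SecondCountableTopology Y] [MeasurableSpace Y]
    [OpensMeasurableSpace Y] [StandardBorelSpace Y] {s : Set Y} (hs : MeasurableSet s)
    (hunc : ¬ s.Countable) : ∃ A ⊆ s, A.Countable ∧ ¬ IsGδ A := by
  have := hs.standardBorel
  have : Uncountable s := not_countable_iff.1 hunc
  obtain ⟨g, hg_inj, hg⟩ := exists_injective_continuous_comp
    (measurable_subtype_coe (p := (· ∈ s)))
  obtain ⟨D, hD, hDd⟩ := exists_countable_dense (ℕ → Bool)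
  refine ⟨(Subtype.val ∘ g) '' D, ?_, hD.image _, fun hG => ?_⟩
  · rw [image_subset_iff]
    exact fun z _ => (g z).2
  · refine not_isGδ_of_countable_of_dense hD hDd ?_
    simpa only [preimage_image_eq D (Subtype.val_injective.comp hg_inj)] using hG.preimage hg

theorem preimage_mem_residual_of_isDenseInducing {Q : Type*} [TopologicalSpace Q] {f : Y → Q}
    (hf : IsDenseInducing f) {s : Set Q} (hs : s ∈ residual Q) : f ⁻¹' s ∈ residual Y := by
  obtain ⟨S, hSo, hSd, hSc, hSs⟩ := mem_residual_iff.1 hs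
  refine mem_of_superset ((countable_bInter_mem hSc).2 fun t ht =>
    residual_of_dense_open ((hSo t ht).preimage hf.continuous) ?_) ?_
  · rw [← hf.dense_image, image_preimage_eq_inter_range]
    exact (hSd t ht).inter_of_isOpen_left hf.dense (hSo t ht)
  · rw [← preimage_iInter₂, ← sInter_eq_biInter]
    exact preimage_mono hSs

theorem range_mem_residual_of_isDenseInducing [BaireSpace Y] {Q : Type*} [TopologicalSpace Q]
    {f : Y → Q} (hf : IsDenseInducing f) (hrange : BaireMeasurableSet (range f)) :
    range f ∈ residual Q := by
  obtain ⟨O, hO, hOrange⟩ := hrange.residualEq_isOpen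
  have residual_preimage : f ⁻¹' O ∈ residual Y := by
    filter_upwards [preimage_mem_residual_of_isDenseInducing hf hOrange] with y hy
    exact (show (f y ∈ range f) = (f y ∈ O) from hy) ▸ mem_range_self y
  have dense_O : Dense O :=
    (hf.dense_image.2 (dense_of_mem_residual residual_preimage)).mono (image_preimage_subset f O)
  filter_upwards [hOrange, residual_of_dense_open hO dense_O] with q hq hqO
  exact (show (q ∈ range f) = (q ∈ O) from hq) ▸ hqO

end Perfect

/-! ### The meagre part of a space -/

section MeagreInterior

variable {Y : Type*} [TopologicalSpace Y]

variable (Y) in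
/-- The union of all meagre open sets. In a second countable space it is itself meagre
(Banach's category theorem), and it is empty exactly when the space is a Baire space. -/
def meagreInterior : Set Y :=
  ⋃₀ {U | IsOpen U ∧ IsMeagre U}

theorem isOpen_meagreInterior : IsOpen (meagreInterior Y) :=
  isOpen_sUnion fun _ hU => hU.1

theorem subset_meagreInterior {U : Set Y} (hU : IsOpen U) (hUm : IsMeagre U) :
    U ⊆ meagreInterior Y :=
  subset_sUnion_of_mem ⟨hU, hUm⟩

theorem isMeagre_meagreInterior [SecondCountableTopology Y] : IsMeagre (meagreInterior Y) := by
  obtain ⟨T, hT, hTsub, hTU⟩ :=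
    isOpen_sUnion_countable {U : Set Y | IsOpen U ∧ IsMeagre U} fun _ hU => hU.1
  rw [meagreInterior, ← hTU, sUnion_eq_biUnion]
  exact isMeagre_biUnion hT fun U hU => (hTsub hU).2

theorem preimage_meagreInterior (h : Y ≃ₜ Y) : h ⁻¹' meagreInterior Y = meagreInterior Y := by
  have preimage_subset (g : Y ≃ₜ Y) : g ⁻¹' meagreInterior Y ⊆ meagreInterior Y := by
    rw [meagreInterior, preimage_sUnion]
    exact iUnion₂_subset fun U hU => subset_meagreInterior (hU.1.preimage g.continuous)
      (hU.2.preimage_of_isOpenMap g.continuous g.isOpenMap)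
  refine (preimage_subset h).antisymm fun y hy => preimage_subset h.symm ?_
  simpa using hy

theorem baireSpace_of_meagreInterior_eq_empty (hY : meagreInterior Y = ∅) : BaireSpace Y where
  baire_property O hO hOd := by
    have isMeagre_compl : IsMeagre (⋂ n, O n)ᶜ := by
      rw [IsMeagre, compl_compl]
      exact countable_iInter_mem.2 fun n => residual_of_dense_open (hO n) (hOd n)
    rw [← compl_compl (⋂ n, O n), ← interior_eq_empty_iff_dense_compl, ← subset_empty_iff, ← hY]
    exact subset_meagreInterior isOpen_interior (isMeagre_compl.mono interior_subset)

theorem nhdsNE_neBot_of_mem_isMeagre {U : Set Y} (hU : IsMeagre U) {y : Y} (hy : y ∈ U) :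
    (𝓝[≠] y).NeBot := by
  obtain ⟨S, hS, -, hUS⟩ := isMeagre_iff_countable_union_isNowhereDense.1 hU
  obtain ⟨t, ht, hyt⟩ := hUS hy
  rw [neBot_iff, ne_eq, ← isOpen_singleton_iff_punctured_nhds]
  intro hopen
  have : y ∈ interior (closure t) :=
    interior_maximal (singleton_subset_iff.2 (subset_closure hyt)) hopen rfl
  rwa [hS t ht] at this

theorem exists_countable_dense_forall_finite_inter [SecondCountableTopology Y] {ι : Type*}
    [Countable ι] {F : ι → Set Y} (hF : ∀ i, IsNowhereDense (F i)) :
    ∃ D : Set Y, D.Countable ∧ Dense D ∧ ∀ i, (F i ∩ D).Finite := by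
  have := Encodable.ofCountable ι
  have := Encodable.ofCountable (countableBasis Y)
  have avoid (V : countableBasis Y) :
      ∃ d ∈ V.1, ∀ i, Encodable.encode i ≤ Encodable.encode V → d ∉ F i := by
    let early := {i : ι | Encodable.encode i ≤ Encodable.encode V}
    have early_finite : early.Finite :=
      (finite_le_nat _).preimage Encodable.encode_injective.injOn
    have compl_open_dense (i : ι) : IsOpen (closure (F i))ᶜ ∧ Dense (closure (F i))ᶜ :=
      isClosed_isNowhereDense_iff_compl.1 ⟨isClosed_closure, (hF i).closure⟩
    have dense_sInter : Dense (⋂₀ ((fun i => (closure (F i))ᶜ) '' early)) :=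
      (early_finite.image _).dense_sInter (forall_mem_image.2 fun i _ => (compl_open_dense i).1)
        (forall_mem_image.2 fun i _ => (compl_open_dense i).2)
    obtain ⟨d, hdV, hd⟩ := dense_sInter.inter_open_nonempty V
      (isOpen_of_mem_countableBasis V.2) (nonempty_of_mem_countableBasis V.2)
    exact ⟨d, hdV, fun i hi hdi => hd _ (mem_image_of_mem _ hi) (subset_closure hdi)⟩
  choose d hdV hdF using avoid
  refine ⟨range d, countable_range d, ?_, fun i => ?_⟩
  · exact (isBasis_countableBasis Y).dense_iff.2 fun V hV _ =>
      ⟨d ⟨V, hV⟩, hdV ⟨V, hV⟩, mem_range_self _⟩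
  · refine (((finite_lt_nat (Encodable.encode i)).preimage
      Encodable.encode_injective.injOn).image d).subset ?_
    rintro _ ⟨hdi, V, rfl⟩
    exact ⟨V, not_le.1 fun hle => hdF V i hle hdi, rfl⟩

theorem exists_countable_dense_isGδ_inter [SecondCountableTopology Y] [T1Space Y] {U : Set Y}
    (hU : IsGδ U) (hUm : IsMeagre U) : ∃ D : Set Y, D.Countable ∧ Dense D ∧ IsGδ (U ∩ D) := by
  obtain ⟨S, hS, hSc, hUS⟩ := isMeagre_iff_countable_union_isNowhereDense.1 hUm
  have := hSc.to_subtype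
  obtain ⟨D, hD, hDd, hfin⟩ :=
    exists_countable_dense_forall_finite_inter fun t : S => (hS t t.2).closure
  refine ⟨D, hD, hDd, ?_⟩
  suffices U ∩ D = U ∩ ⋂ t : S, ((closure (t : Set Y))ᶜ ∪ closure (t : Set Y) ∩ D) by
    rw [this]
    exact hU.inter (.iInter fun t => isClosed_closure.isOpen_compl.isGδ.union (hfin t).isGδ)
  refine inter_eq_inter_iff_left.2 ⟨fun y hy => ?_, fun y hy => mem_iInter.2 fun t => ?_⟩
  · obtain ⟨t, ht, hyt⟩ := hUS hy.1
    exact ((mem_iInter.1 hy.2 ⟨t, ht⟩).resolve_left (not_not.2 (subset_closure hyt))).2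
  · exact (em (y ∈ closure (t : Set Y))).elim (fun hyt => .inr ⟨hyt, hy.2⟩) .inl

end MeagreInterior

/-! ### Countable dense homogeneous spaces -/

section CDH

variable {Y : Type*} [TopologicalSpace Y]

namespace IsCDH

variable (hY : IsCDH Y)

include hY

theorem isClopen_of_isOpen [SeparableSpace Y] {V : Set Y} (hV : IsOpen V)
    (hinv : ∀ h : Y ≃ₜ Y, h ⁻¹' V = V) : IsClopen V := by
  rw [isClopen_iff_frontier_eq_empty, ← not_nonempty_iff_eq_empty]
  rintro ⟨x, hx⟩
  obtain ⟨D, hD, hDd⟩ := exists_countable_dense Y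
  have dense_compl : Dense (frontier V)ᶜ := by
    rw [← interior_eq_empty_iff_dense_compl, ← frontier_compl]
    exact interior_frontier hV.isClosed_compl
  obtain ⟨h, hh⟩ := hY (insert x D) (D ∩ (frontier V)ᶜ) (hD.insert x) (hDd.mono (subset_insert x D))
    (hD.mono inter_subset_left)
    (hDd.inter_of_isOpen_right dense_compl isClosed_frontier.isOpen_compl)
  have mem_frontier : h x ∈ frontier V := by
    rwa [← mem_preimage, h.preimage_frontier, hinv]
  exact (hh ▸ mem_image_of_mem h (mem_insert x D)).2 mem_frontier

theorem eq_empty_of_countable [SeparableSpace Y] [T1Space Y] {N : Set Y} (hN : N.Countable)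
    (hinv : ∀ h : Y ≃ₜ Y, h ⁻¹' N = N) (hiso : ∀ y ∈ N, (𝓝[≠] y).NeBot) : N = ∅ := by
  refine eq_empty_of_forall_notMem fun y hy => ?_
  have := hiso y hy
  obtain ⟨D, hD, hDd⟩ := exists_countable_dense Y
  have dense_union : Dense (D ∪ N) := hDd.mono subset_union_left
  obtain ⟨h, hh⟩ := hY (D ∪ N) ((D ∪ N) \ {y}) (hD.union hN) dense_union
    ((hD.union hN).mono sdiff_subset) (dense_union.sdiff_singleton y)
  have symm_mem : h.symm y ∈ N := by
    rwa [← mem_preimage, hinv]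
  exact (hh ▸ mem_image_of_mem h (mem_union_right D symm_mem)).2 (h.apply_symm_apply y)

theorem isGδ_inter_of_countable_of_dense [SecondCountableTopology Y] [T1Space Y] {U : Set Y}
    (hU : IsGδ U) (hUm : IsMeagre U) (hinv : ∀ h : Y ≃ₜ Y, h ⁻¹' U = U) {D : Set Y}
    (hD : D.Countable) (hDd : Dense D) : IsGδ (U ∩ D) := by
  obtain ⟨E, hE, hEd, hUE⟩ := exists_countable_dense_isGδ_inter hU hUm
  obtain ⟨h, rfl⟩ := hY E D hE hEd hD hDd
  rw [← hinv h.symm, h.image_eq_preimage_symm, ← preimage_inter]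
  exact hUE.preimage h.symm.continuous

theorem isGδ_of_countable_subset [SecondCountableTopology Y] [T1Space Y] {U : Set Y} (hU : IsGδ U)
    (hUm : IsMeagre U) (hinv : ∀ h : Y ≃ₜ Y, h ⁻¹' U = U) {A : Set Y} (hAU : A ⊆ U)
    (hA : A.Countable) : IsGδ A := by
  obtain ⟨D, hD, hDd⟩ := exists_countable_dense Y
  have isGδ_inter : IsGδ (U ∩ (A ∪ D)) := hY.isGδ_inter_of_countable_of_dense hU hUm hinv
    (hA.union hD) (hDd.mono subset_union_right)
  suffices A = U ∩ (A ∪ D) ∩ (D \ A)ᶜ by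
    rw [this]
    exact isGδ_inter.inter (hD.mono sdiff_subset).isGδ_compl
  ext y
  have := @hAU y
  simp only [mem_inter_iff, mem_union, mem_compl_iff, Set.mem_sdiff]
  tauto

theorem meagreInterior_eq_empty [SecondCountableTopology Y] [T1Space Y] [MeasurableSpace Y]
    [OpensMeasurableSpace Y] [StandardBorelSpace Y] : meagreInterior Y = ∅ := by
  refine hY.eq_empty_of_countable ?_ preimage_meagreInterior fun y hy =>
    nhdsNE_neBot_of_mem_isMeagre isMeagre_meagreInterior hy
  by_contra hunc
  obtain ⟨A, hAU, hA, hAG⟩ :=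
    exists_countable_subset_not_isGδ isOpen_meagreInterior.measurableSet hunc
  exact hAG <| hY.isGδ_of_countable_subset isOpen_meagreInterior.isGδ isMeagre_meagreInterior
    preimage_meagreInterior hAU hA

theorem exists_isGδ_subset_range {Q : Type*} [TopologicalSpace Q] [PolishSpace Q] {f : Y → Q}
    (hf : IsDenseEmbedding f) (hrange : range f ∈ residual Q) {A : Set Q} (hAf : A ⊆ range f)
    (hA : A.Countable) : ∃ G, IsGδ G ∧ A ⊆ G ∧ G ⊆ range f := by
  obtain ⟨G, hGf, hG, hGd⟩ := mem_residual.1 hrange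
  obtain ⟨D, hDG, hD, hDd⟩ := hGd.exists_countable_dense_subset
  have dense_preimage : Dense (f ⁻¹' D) := by
    rwa [← hf.dense_image, image_preimage_eq_of_subset (hDG.trans hGf)]
  obtain ⟨h, hh⟩ := hY (f ⁻¹' D) (f ⁻¹' D ∪ f ⁻¹' A) (hD.preimage hf.injective) dense_preimage
    ((hD.preimage hf.injective).union (hA.preimage hf.injective))
    (dense_preimage.mono subset_union_left)
  have := polishSpace_of_isGδ hG
  let e : G → Y := hf.isEmbedding.toHomeomorph.symm ∘ inclusion hGf
  have e_emb : IsEmbedding e :=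
    hf.isEmbedding.toHomeomorph.symm.isEmbedding.comp (.inclusion hGf)
  have apply_e (x : G) : f (e x) = x :=
    congrArg Subtype.val (hf.isEmbedding.toHomeomorph.apply_symm_apply (inclusion hGf x))
  refine ⟨range (f ∘ h ∘ e), isGδ_range_of_isEmbedding
    (hf.isEmbedding.comp (h.isEmbedding.comp e_emb)), fun a ha => ?_, range_comp_subset_range _ _⟩
  obtain ⟨y, rfl⟩ := hAf ha
  obtain ⟨z, hz, rfl⟩ : y ∈ h '' (f ⁻¹' D) := hh ▸ mem_union_right _ ha
  exact ⟨⟨f z, hDG hz⟩, congrArg (f ∘ h) (hf.injective (apply_e _))⟩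

theorem polishSpace [MetrizableSpace Y] [SecondCountableTopology Y] [MeasurableSpace Y]
    [BorelSpace Y] [StandardBorelSpace Y] : PolishSpace Y := by
  let _ := metrizableSpaceMetric Y
  let Q := UniformSpace.Completion Y
  let _ : MeasurableSpace Q := borel Q
  have : BorelSpace Q := ⟨rfl⟩
  have : PolishSpace Q := inferInstance
  have embedding : IsDenseEmbedding ((↑) : Y → Q) := UniformSpace.Completion.isDenseEmbedding_coe
  have measurable_range : MeasurableSet (range ((↑) : Y → Q)) :=
    (embedding.continuous.measurable.measurableEmbedding embedding.injective).measurableSet_range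
  have : BaireSpace Y := baireSpace_of_meagreInterior_eq_empty hY.meagreInterior_eq_empty
  have residual_range := range_mem_residual_of_isDenseInducing embedding.isDenseInducing
    measurable_range.baireMeasurableSet
  have isGδ_range : IsGδ (range ((↑) : Y → Q)) :=
    isGδ_of_analyticSet_compl measurable_range.compl.analyticSet fun A hAf hA =>
      hY.exists_isGδ_subset_range embedding residual_range hAf hA
  have := polishSpace_of_isGδ isGδ_range
  exact embedding.isEmbedding.toHomeomorph.isClosedEmbedding.polishSpace

end IsCDH

end CDH

/-! ### Zero-dimensional spaces -/

section Partition

variable {Y : Type*} [TopologicalSpace Y]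

theorem isTopologicalBasis_isClopen_subtype (hzd : IsTopologicalBasis {U : Set Y | IsClopen U})
    (S : Set Y) : IsTopologicalBasis {U : Set S | IsClopen U} := by
  refine isTopologicalBasis_of_isOpen_of_nhds (fun U hU => hU.isOpen) fun x U hx hU => ?_
  obtain ⟨W, hW, rfl⟩ := isOpen_induced_iff.1 hU
  obtain ⟨V, hV, hxV, hVW⟩ := hzd.exists_subset_of_mem_open hx hW
  exact ⟨Subtype.val ⁻¹' V, hV.preimage continuous_subtype_val, hxV, preimage_mono hVW⟩

theorem exists_isClopen_inter_nonempty_diff_nonempty [T1Space Y] [PerfectSpace Y]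
    (hzd : IsTopologicalBasis {U : Set Y | IsClopen U}) {S : Set Y} (hS : IsOpen S)
    (hne : S.Nonempty) : ∃ U, IsClopen U ∧ (S ∩ U).Nonempty ∧ (S \ U).Nonempty := by
  obtain ⟨x, hx⟩ := hne
  obtain ⟨y, hy, hyx⟩ : ∃ y ∈ S, y ≠ x := by
    by_contra! h
    exact not_isOpen_singleton x (by rwa [← eq_singleton_iff_unique_mem.2 ⟨hx, h⟩])
  obtain ⟨U, hU, hxU, hUy⟩ := hzd.exists_subset_of_mem_open (u := {y}ᶜ) hyx.symm
    isOpen_compl_singleton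
  exact ⟨U, hU, ⟨x, hx, hxU⟩, y, hy, fun h => hUy h rfl⟩

theorem exists_clopen_disjoint_refinement [SecondCountableTopology Y]
    (hzd : IsTopologicalBasis {U : Set Y | IsClopen U}) {ι : Type*} [Nonempty ι]
    {c : ι → Set Y} (hc : ∀ i, IsOpen (c i)) :
    ∃ d : ℕ → Set Y, (∀ n, IsClopen (d n)) ∧ (∀ n, ∃ i, d n ⊆ c i) ∧ Pairwise (Disjoint on d) ∧
      ⋃ n, d n = ⋃ i, c i := by
  obtain ⟨B, hB, hBc, hBb⟩ := hzd.exists_countable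
  let K : Set (Set Y) := {V ∈ insert ∅ B | ∃ i, V ⊆ c i}
  obtain ⟨g, hg⟩ := ((hBc.insert ∅).mono (sep_subset _ _) : K.Countable).exists_eq_range
    ⟨∅, mem_insert _ _, Classical.arbitrary ι, empty_subset _⟩
  have g_mem (n : ℕ) : g n ∈ K := hg ▸ mem_range_self n
  have isClopen_g (n : ℕ) : IsClopen (g n) :=
    (g_mem n).1.elim (fun h => h ▸ isClopen_empty) (fun h => hB h)
  refine ⟨disjointed g, fun n => disjointedRec (fun _ i h => h.diff (isClopen_g i)) (isClopen_g n),
    fun n => (g_mem n).2.imp fun i hi => (disjointed_subset g n).trans hi,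
    disjoint_disjointed g, ?_⟩
  rw [iUnion_disjointed]
  refine Subset.antisymm (iUnion_subset fun n => ?_) (iUnion_subset fun i x hx => ?_)
  · obtain ⟨i, hi⟩ := (g_mem n).2
    exact subset_iUnion_of_subset i hi
  · obtain ⟨V, hV, hxV, hVc⟩ := hBb.exists_subset_of_mem_open hx (hc i)
    obtain ⟨n, rfl⟩ : V ∈ range g := hg ▸ ⟨mem_insert_of_mem _ hV, i, hVc⟩
    exact mem_iUnion_of_mem n hxV

theorem exists_infinite_clopen_refinement [SecondCountableTopology Y]
    (hzd : IsTopologicalBasis {U : Set Y | IsClopen U}) {ι : Type*} {c : ι → Set Y}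
    (hc : ∀ i, IsOpen (c i)) (hfin : ∀ t : Finset ι, ¬ ⋃ i, c i ⊆ ⋃ i ∈ t, c i) :
    ∃ d : ℕ → Set Y, (∀ n, IsClopen (d n)) ∧ (∀ n, (d n).Nonempty) ∧ (∀ n, ∃ i, d n ⊆ c i) ∧
      Pairwise (Disjoint on d) ∧ ⋃ n, d n = ⋃ i, c i := by
  classical
  have : Nonempty ι := not_isEmpty_iff.1 fun _ => hfin ∅ (by simp)
  obtain ⟨d, hd, hdc, disj, hdU⟩ := exists_clopen_disjoint_refinement hzd hc
  choose i hi using hdc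
  have infinite_nonempty : {n | (d n).Nonempty}.Infinite := by
    intro finite_nonempty
    refine hfin (finite_nonempty.toFinset.image i) ?_
    rw [← hdU]
    refine iUnion_subset fun n x hx => mem_iUnion₂.2 ⟨i n, ?_, hi n hx⟩
    exact Finset.mem_image_of_mem i (finite_nonempty.mem_toFinset.2 ⟨x, hx⟩)
  have := infinite_nonempty.to_subtype
  let e : ℕ ≃o {n | (d n).Nonempty} := Nat.Subtype.orderIsoOfNat _
  refine ⟨fun n => d (e n), fun n => hd _, fun n => (e n).2, fun n => ⟨i (e n), hi _⟩,
    disj.comp_of_injective (Subtype.val_injective.comp e.injective), ?_⟩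
  rw [← hdU]
  refine Subset.antisymm (iUnion_subset fun n => subset_iUnion d _) (iUnion_subset fun n x hx => ?_)
  exact mem_iUnion.2 ⟨e.symm ⟨n, x, hx⟩, by rwa [e.apply_symm_apply]⟩

theorem exists_infinite_clopen_partition [SecondCountableTopology Y]
    (hzd : IsTopologicalBasis {U : Set Y | IsClopen U}) {S : Set Y} (hS : IsOpen S)
    (hSc : ¬ IsCompact S) {κ : Type*} {v : κ → Set Y} (hv : ∀ k, IsOpen (v k))
    (hSv : S ⊆ ⋃ k, v k) :
    ∃ d : ℕ → Set Y, (∀ n, IsClopen (d n)) ∧ (∀ n, (d n).Nonempty) ∧ (∀ n, ∃ k, d n ⊆ v k) ∧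
      Pairwise (Disjoint on d) ∧ ⋃ n, d n = S := by
  classical
  obtain ⟨ι, u, hu, hSu, hfin⟩ : ∃ (ι : Type _) (u : ι → Set Y), (∀ i, IsOpen (u i)) ∧
      S ⊆ ⋃ i, u i ∧ ∀ t : Finset ι, ¬ S ⊆ ⋃ i ∈ t, u i := by
    contrapose! hSc
    exact isCompact_of_finite_subcover fun {ι} u hu hSu => hSc ι u hu hSu
  let c : ι × κ → Set Y := fun q => S ∩ (u q.1 ∩ v q.2)
  have iUnion_c : ⋃ q, c q = S := by
    refine Subset.antisymm (iUnion_subset fun q => inter_subset_left) fun x hx => ?_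
    obtain ⟨i, hi⟩ := mem_iUnion.1 (hSu hx)
    obtain ⟨k, hk⟩ := mem_iUnion.1 (hSv hx)
    exact mem_iUnion.2 ⟨(i, k), hx, hi, hk⟩
  obtain ⟨d, hd, hne, hdc, disj, hdU⟩ := exists_infinite_clopen_refinement hzd (c := c)
    (fun q => hS.inter ((hu _).inter (hv _))) fun t ht => hfin (t.image Prod.fst) <| by
      rw [← iUnion_c]
      refine ht.trans (iUnion₂_subset fun q hq x hx => ?_)
      exact mem_iUnion₂.2 ⟨q.1, Finset.mem_image_of_mem _ hq, hx.2.1⟩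
  exact ⟨d, hd, hne, fun n => (hdc n).imp' Prod.snd fun q hq x hx => (hq hx).2.2, disj,
    hdU.trans iUnion_c⟩

end Partition

section PartitionScheme

open PiNat

variable {Y β : Type*}

/-- A scheme of sets, in the sense of `CantorScheme`, in which every set is partitioned by its
children and the root is the whole space. Every point lies on exactly one branch. -/
structure IsPartitionScheme (A : List β → Set Y) : Prop where
  nil : A [] = univ
  iUnion_cons (s : List β) : ⋃ b, A (b :: s) = A s
  disjoint : CantorScheme.Disjoint A

theorem exists_isPartitionScheme {p : Set Y → Prop} {r : ℕ → Set Y → Prop} (huniv : p univ)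
    (hsplit : ∀ (S : Set Y) (n : ℕ), p S → ∃ T : β → Set Y, (∀ b, p (T b)) ∧ (∀ b, r n (T b)) ∧
      Pairwise (Disjoint on T) ∧ ⋃ b, T b = S) :
    ∃ A : List β → Set Y, IsPartitionScheme A ∧ (∀ s, p (A s)) ∧
      ∀ b s, r s.length (A (b :: s)) := by
  choose T hp hr hdisj hU using hsplit
  let A : List β → {S : Set Y // p S} := fun s =>
    List.rec ⟨univ, huniv⟩ (fun b s S => ⟨T S.1 s.length S.2 b, hp _ _ _ _⟩) s
  exact ⟨fun s => (A s).1, ⟨rfl, fun s => hU _ _ _, fun s => hdisj _ _ _⟩, fun s => (A s).2,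
    fun b s => hr _ _ _ _⟩

namespace IsPartitionScheme

variable {A : List β → Set Y} (hA : IsPartitionScheme A)

include hA

theorem antitone : CantorScheme.Antitone A := fun s b => by
  rw [← hA.iUnion_cons s]
  exact subset_iUnion (fun b => A (b :: s)) b

theorem exists_forall_mem_res {y : Y} : ∃ z : ℕ → β, ∀ n, y ∈ A (res z n) := by
  have exists_child (s : {s // y ∈ A s}) : ∃ b, y ∈ A (b :: s.1) :=
    mem_iUnion.1 ((hA.iUnion_cons s).symm ▸ s.2)
  choose b hb using exists_child
  let branch : ℕ → {s // y ∈ A s} :=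
    fun n => Nat.rec ⟨[], hA.nil ▸ mem_univ y⟩ (fun _ s => ⟨b s :: s.1, hb s⟩) n
  refine ⟨fun n => b (branch n), fun n => ?_⟩
  suffices res (fun n => b (branch n)) n = (branch n).1 from this ▸ (branch n).2
  induction n with
  | zero => rfl
  | succ n ih => rw [res_succ, ih]

theorem res_eq_of_mem {y : Y} {z w : ℕ → β} {n : ℕ} (hz : y ∈ A (res z n))
    (hw : y ∈ A (res w n)) : res z n = res w n := by
  induction n with
  | zero => rfl
  | succ n ih =>
    rw [res_succ] at hz hw
    have res_eq := ih (hA.antitone _ _ hz) (hA.antitone _ _ hw)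
    rw [← res_eq] at hw
    have head_eq : z n = w n := by
      by_contra hne
      exact disjoint_left.1 (hA.disjoint _ hne) hz hw
    rw [res_succ, res_succ, res_eq, head_eq]

theorem nonempty_homeomorph [TopologicalSpace Y] [T0Space Y] [TopologicalSpace β]
    [DiscreteTopology β] (hopen : ∀ s, IsOpen (A s))
    (hne : ∀ z : ℕ → β, (⋂ n, A (res z n)).Nonempty)
    (hfine : ∀ (z : ℕ → β) (y : Y), (∀ n, y ∈ A (res z n)) → ∀ U ∈ 𝓝 y, ∃ n, A (res z n) ⊆ U) :
    Nonempty (Y ≃ₜ (ℕ → β)) := by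
  choose f hf using hne
  simp only [mem_iInter] at hf
  have injective : Function.Injective f := fun z w hzw =>
    res_injective <| funext fun n => hA.res_eq_of_mem (hf z n) (hzw ▸ hf w n)
  have surjective : Function.Surjective f := fun y => by
    obtain ⟨z, hz⟩ := hA.exists_forall_mem_res (y := y)
    have specializes {a b : Y} (ha : ∀ n, a ∈ A (res z n)) (hb : ∀ n, b ∈ A (res z n)) : a ⤳ b :=
      specializes_iff_pure.2 fun U hU => (hfine z b hb U hU).elim fun n hn => hn (ha n)
    exact ⟨z, ((specializes (hf z) hz).antisymm (specializes hz (hf z))).eq⟩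
  have continuous : Continuous f := continuous_iff_continuousAt.2 fun z U hU => by
    obtain ⟨n, hn⟩ := hfine z (f z) (hf z) U hU
    rw [mem_map]
    filter_upwards [(isOpen_cylinder _ z n).mem_nhds (self_mem_cylinder z n)] with w hw
    rw [cylinder_eq_res] at hw
    exact hn (hw ▸ hf w n)
  have isOpenMap : IsOpenMap f := by
    refine (isTopologicalBasis_cylinders _).isOpenMap_iff.2 ?_
    rintro _ ⟨z, n, rfl⟩
    suffices f '' cylinder z n = A (res z n) from this ▸ hopen _
    refine Subset.antisymm (image_subset_iff.2 fun w hw => ?_) fun y hy => ?_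
    · rw [cylinder_eq_res] at hw
      exact hw ▸ hf w n
    · obtain ⟨w, rfl⟩ := surjective y
      exact mem_image_of_mem f (cylinder_eq_res z n ▸ hA.res_eq_of_mem (hf w n) hy)
  exact ⟨((Equiv.ofBijective f ⟨injective, surjective⟩).toHomeomorphOfContinuousOpen
    continuous isOpenMap).symm⟩

end IsPartitionScheme

end PartitionScheme

section Characterization

variable {Y : Type*} [TopologicalSpace Y]

theorem exists_clopen_bipartition [T1Space Y] [PerfectSpace Y]
    (hzd : IsTopologicalBasis {U : Set Y | IsClopen U}) {C S : Set Y} (hC : IsClopen C)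
    (hS : IsClopen S) (hne : S.Nonempty) :
    ∃ T : Bool → Set Y, (∀ b, IsClopen (T b) ∧ (T b).Nonempty) ∧
      (∀ b, T b ⊆ C ∨ Disjoint (T b) C) ∧ Pairwise (Disjoint on T) ∧ ⋃ b, T b = S := by
  obtain ⟨U, hU, hSU, hSU', hCU⟩ : ∃ U, IsClopen U ∧ (S ∩ U).Nonempty ∧ (S \ U).Nonempty ∧
      (S ⊆ C ∨ Disjoint S C ∨ U = C) := by
    by_cases h : (S ∩ C).Nonempty ∧ (S \ C).Nonempty
    · exact ⟨C, hC, h.1, h.2, .inr (.inr rfl)⟩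
    · obtain ⟨U, hU, hSU, hSU'⟩ := exists_isClopen_inter_nonempty_diff_nonempty hzd hS.isOpen hne
      refine ⟨U, hU, hSU, hSU', ?_⟩
      rw [not_and_or, not_nonempty_iff_eq_empty, not_nonempty_iff_eq_empty,
        ← disjoint_iff_inter_eq_empty, sdiff_eq_empty] at h
      tauto
  refine ⟨fun b => cond b (S ∩ U) (S \ U), ?_, ?_, ?_, ?_⟩
  · exact Bool.forall_bool.2 ⟨⟨hS.diff hU, hSU'⟩, hS.inter hU, hSU⟩
  · rcases hCU with hSC | hSC | rfl
    · exact Bool.forall_bool.2 ⟨.inl (sdiff_subset.trans hSC), .inl (inter_subset_left.trans hSC)⟩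
    · exact Bool.forall_bool.2
        ⟨.inr (hSC.mono_left sdiff_subset), .inr (hSC.mono_left inter_subset_left)⟩
    · exact Bool.forall_bool.2 ⟨.inr disjoint_sdiff_left, .inl inter_subset_right⟩
  · exact pairwise_disjoint_on_bool.2 disjoint_sdiff_inter.symm
  · rw [← union_eq_iUnion, inter_union_sdiff]

theorem nonempty_homeomorph_cantor_of_compactSpace [CompactSpace Y] [T1Space Y]
    [SecondCountableTopology Y] [Nonempty Y] [PerfectSpace Y]
    (hzd : IsTopologicalBasis {U : Set Y | IsClopen U}) : Nonempty (Y ≃ₜ (ℕ → Bool)) := by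
  obtain ⟨B, hB, hBc, hBb⟩ := hzd.exists_countable
  obtain ⟨V, hV, -⟩ := hBb.exists_subset_of_mem_open (mem_univ (Classical.arbitrary Y)) isOpen_univ
  obtain ⟨C, hC⟩ := hBc.exists_eq_range ⟨V, hV⟩
  have isClopen_C (n : ℕ) : IsClopen (C n) := hB (hC ▸ mem_range_self n)
  obtain ⟨A, hA, hclopen, hAC⟩ := exists_isPartitionScheme (β := Bool)
    (p := fun S => IsClopen S ∧ S.Nonempty) (r := fun n S => S ⊆ C n ∨ Disjoint S (C n))
    ⟨isClopen_univ, univ_nonempty⟩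
    fun S n hS => exists_clopen_bipartition hzd (isClopen_C n) hS.1 hS.2
  refine hA.nonempty_homeomorph (fun s => (hclopen s).1.isOpen) (fun z => ?_) fun z y hy U hU => ?_
  · exact IsCompact.nonempty_iInter_of_sequence_nonempty_isCompact_isClosed _
      (fun n => hA.antitone _ _) (fun n => (hclopen _).2) (hclopen _).1.isClosed.isCompact
      (fun n => (hclopen _).1.isClosed)
  · obtain ⟨_, hV, hyV, hVU⟩ := hBb.mem_nhds_iff.1 hU
    obtain ⟨n, rfl⟩ := hC ▸ hV
    have decided := hAC (z n) (PiNat.res z n)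
    rw [PiNat.res_length] at decided
    exact ⟨n + 1, (decided.resolve_right fun h => disjoint_left.1 h (hy (n + 1)) hyV).trans hVU⟩

theorem nonempty_homeomorph_baire_of_forall_not_isCompact [PolishSpace Y] [Nonempty Y]
    (hzd : IsTopologicalBasis {U : Set Y | IsClopen U})
    (hnc : ∀ S : Set Y, IsClopen S → S.Nonempty → ¬ IsCompact S) : Nonempty (Y ≃ₜ (ℕ → ℕ)) := by
  let _ := upgradeIsCompletelyMetrizable Y
  obtain ⟨A, hA, hclopen, hdiam⟩ := exists_isPartitionScheme (β := ℕ)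
    (p := fun S => IsClopen S ∧ S.Nonempty) (r := fun n S => Metric.ediam S ≤ 2 * (n : ENNReal)⁻¹)
    ⟨isClopen_univ, univ_nonempty⟩ fun S n hS => by
      obtain ⟨T, hT, hne, hball, hdisj, hU⟩ := exists_infinite_clopen_partition hzd hS.1.isOpen
        (hnc S hS.1 hS.2) (v := fun y : Y => Metric.eball y (n : ENNReal)⁻¹)
        (fun y => Metric.isOpen_eball) fun y _ => mem_iUnion.2 ⟨y, Metric.mem_eball_self (by simp)⟩
      exact ⟨T, fun k => ⟨hT k, hne k⟩, fun k => (hball k).elim fun y hy =>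
        (Metric.ediam_mono hy).trans Metric.ediam_eball_le, hdisj, hU⟩
  have vanishing : CantorScheme.VanishingDiam A := fun z => by
    rw [← tendsto_add_atTop_iff_nat 1]
    refine tendsto_of_tendsto_of_tendsto_of_le_of_le tendsto_const_nhds ?_ (fun _ => zero_le)
      (fun n => (hdiam (z n) (PiNat.res z n)).trans_eq (by rw [PiNat.res_length]))
    simpa using ENNReal.Tendsto.const_mul ENNReal.tendsto_inv_nat_nhds_zero
      (.inr ENNReal.ofNat_ne_top)
  refine hA.nonempty_homeomorph (fun s => (hclopen s).1.isOpen) (fun z => ?_) fun z y hy U hU => ?_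
  · exact eq_univ_iff_forall.1 ((hA.antitone.closureAntitone fun s =>
      (hclopen s).1.isClosed).map_of_vanishingDiam vanishing fun s => (hclopen s).2) z
  · obtain ⟨ε, hε, hεU⟩ := Metric.mem_nhds_iff.1 hU
    obtain ⟨n, hn⟩ := vanishing.dist_lt ε hε z
    exact ⟨n, fun x hx => hεU (hn x hx y (hy n))⟩

end Characterization

/-! ### Points of local compactness -/

section LocallyCompactPart

variable {Y : Type*} [TopologicalSpace Y]

theorem isHomeomorph_sumCompl {V : Set Y} [DecidablePred (· ∈ V)] (hV : IsClopen V) :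
    IsHomeomorph (Equiv.Set.sumCompl V) :=
  ⟨continuous_sum_dom.2 ⟨continuous_subtype_val, continuous_subtype_val⟩,
    isOpenMap_sum.2 ⟨hV.isOpen.isOpenMap_subtype_val, hV.compl.isOpen.isOpenMap_subtype_val⟩,
    (Equiv.Set.sumCompl V).bijective⟩

theorem isHomeomorph_sigmaEquiv {ι : Type*} {T : ι → Set Y} (hT : ∀ i, IsOpen (T i))
    (hT' : ∀ y, ∃! i, y ∈ T i) : IsHomeomorph (Set.sigmaEquiv T hT') :=
  ⟨continuous_sigma fun _ => continuous_subtype_val,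
    isOpenMap_sigma.2 fun i => (hT i).isOpenMap_subtype_val, (Set.sigmaEquiv T hT').bijective⟩

theorem nonempty_homeomorph_sigma_cantor [T2Space Y] [SecondCountableTopology Y] [PerfectSpace Y]
    [WeaklyLocallyCompactSpace Y] [NoncompactSpace Y]
    (hzd : IsTopologicalBasis {U : Set Y | IsClopen U}) :
    Nonempty ((Σ _ : ℕ, (ℕ → Bool)) ≃ₜ Y) := by
  choose K hK hKy using fun y : Y => exists_compact_mem_nhds y
  obtain ⟨T, hT, hne, hTK, hdisj, hU⟩ := exists_infinite_clopen_partition hzd isOpen_univ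
    (noncompact_univ Y) (v := fun y => interior (K y)) (fun y => isOpen_interior)
    fun y _ => mem_iUnion.2 ⟨y, mem_interior_iff_mem_nhds.2 (hKy y)⟩
  have homeomorph_cantor (n : ℕ) : Nonempty (T n ≃ₜ (ℕ → Bool)) := by
    obtain ⟨y, hy⟩ := hTK n
    have : CompactSpace (T n) := isCompact_iff_compactSpace.1
      ((hK y).of_isClosed_subset (hT n).isClosed (hy.trans interior_subset))
    have := (hne n).to_subtype
    have := perfectSpace_subtype_of_isOpen (hT n).isOpen
    exact nonempty_homeomorph_cantor_of_compactSpace (isTopologicalBasis_isClopen_subtype hzd _)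
  let e (n : ℕ) : T n ≃ₜ (ℕ → Bool) := (homeomorph_cantor n).some
  have existsUnique_mem (y : Y) : ∃! n, y ∈ T n := by
    obtain ⟨n, hn⟩ := mem_iUnion.1 (hU ▸ mem_univ y)
    exact ⟨n, hn, fun m hm => hdisj.eq (not_disjoint_iff.2 ⟨y, hm, hn⟩)⟩
  exact ⟨(IsHomeomorph.sigmaMap Function.bijective_id fun n => (e n).symm.isHomeomorph).homeomorph
    |>.trans (isHomeomorph_sigmaEquiv (fun n => (hT n).isOpen) existsUnique_mem).homeomorph⟩

theorem noncompactSpace_setOf_ne [T2Space Y] [PerfectSpace Y] (x : Y) :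
    NoncompactSpace {y : Y | y ≠ x} := by
  refine not_compactSpace_iff.1 fun h => not_isOpen_singleton x ?_
  rw [← isClosed_compl_iff, compl_singleton_eq]
  exact (isCompact_iff_compactSpace.2 h).isClosed

theorem nonempty_homeomorph_cantor_or_cantor_diff_singleton [T2Space Y] [SecondCountableTopology Y]
    [PerfectSpace Y] [WeaklyLocallyCompactSpace Y] [Nonempty Y] (x : ℕ → Bool)
    (hzd : IsTopologicalBasis {U : Set Y | IsClopen U}) :
    Nonempty (Y ≃ₜ (ℕ → Bool)) ∨ Nonempty (Y ≃ₜ {y : ℕ → Bool | y ≠ x}) := by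
  by_cases hY : CompactSpace Y
  · exact .inl (nonempty_homeomorph_cantor_of_compactSpace hzd)
  · have := not_compactSpace_iff.1 hY
    have isOpen_ne_x : IsOpen {y : ℕ → Bool | y ≠ x} := isOpen_ne
    have := perfectSpace_subtype_of_isOpen isOpen_ne_x
    have := noncompactSpace_setOf_ne x
    have := isOpen_ne_x.locallyCompactSpace
    obtain ⟨e⟩ := nonempty_homeomorph_sigma_cantor hzd
    obtain ⟨e'⟩ := nonempty_homeomorph_sigma_cantor
      (isTopologicalBasis_isClopen_subtype isTopologicalBasis_isClopen {y : ℕ → Bool | y ≠ x})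
    exact .inr ⟨e.symm.trans e'⟩

/-- The set of points of local compactness of `Y`, i.e. of points having a compact neighbourhood. -/
def locallyCompactPart (Y : Type*) [TopologicalSpace Y] : Set Y :=
  {y | ∃ K ∈ 𝓝 y, IsCompact K}

theorem isOpen_locallyCompactPart : IsOpen (locallyCompactPart Y) := by
  refine isOpen_iff_mem_nhds.2 fun y ⟨K, hK, hKc⟩ => ?_
  filter_upwards [eventually_mem_nhds_iff.2 hK] with z hz
  exact ⟨K, hz, hKc⟩

theorem preimage_locallyCompactPart {Z : Type*} [TopologicalSpace Z] {f : Z → Y}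
    (hf : IsClosedEmbedding f) (ho : IsOpenMap f) :
    f ⁻¹' locallyCompactPart Y = locallyCompactPart Z := by
  ext z
  constructor
  · rintro ⟨K, hK, hKc⟩
    exact ⟨f ⁻¹' K, hf.continuous.continuousAt hK, hf.isCompact_preimage hKc⟩
  · rintro ⟨K, hK, hKc⟩
    exact ⟨f '' K, ho.image_mem_nhds hK, hKc.image hf.continuous⟩

theorem preimage_val_locallyCompactPart {S : Set Y} (hS : IsClopen S) :
    (Subtype.val ⁻¹' locallyCompactPart Y : Set S) = locallyCompactPart S :=
  preimage_locallyCompactPart hS.isClosed.isClosedEmbedding_subtypeVal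
    hS.isOpen.isOpenMap_subtype_val

theorem weaklyLocallyCompactSpace_of_locallyCompactPart_eq_univ (h : locallyCompactPart Y = univ) :
    WeaklyLocallyCompactSpace Y where
  exists_compact_mem_nhds y :=
    (h ▸ mem_univ y : y ∈ locallyCompactPart Y).imp fun _ hK => hK.symm

theorem nonempty_homeomorph_baire_of_locallyCompactPart_eq_empty [PolishSpace Y] [Nonempty Y]
    (hzd : IsTopologicalBasis {U : Set Y | IsClopen U}) (h : locallyCompactPart Y = ∅) :
    Nonempty (Y ≃ₜ (ℕ → ℕ)) := by
  refine nonempty_homeomorph_baire_of_forall_not_isCompact hzd fun S hS ⟨y, hy⟩ hSc => ?_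
  exact eq_empty_iff_forall_notMem.1 h y ⟨S, hS.isOpen.mem_nhds hy, hSc⟩

theorem nonempty_homeomorph_baire_sum [PolishSpace Y]
    (hzd : IsTopologicalBasis {U : Set Y | IsClopen U}) (hV : IsClopen (locallyCompactPart Y))
    (hne : locallyCompactPart Y ≠ univ) :
    Nonempty (Y ≃ₜ (ℕ → ℕ) ⊕ locallyCompactPart Y) := by
  classical
  have := (nonempty_compl.2 hne).to_subtype
  have := hV.compl.isClosed.polishSpace
  obtain ⟨e⟩ := nonempty_homeomorph_baire_of_locallyCompactPart_eq_empty
    (isTopologicalBasis_isClopen_subtype hzd (locallyCompactPart Y)ᶜ) <| by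
      rw [← preimage_val_locallyCompactPart hV.compl]
      exact eq_empty_of_forall_notMem fun y hy => y.2 hy
  exact ⟨(isHomeomorph_sumCompl hV).homeomorph.symm.trans <|
    (Homeomorph.sumComm _ _).trans (e.sumCongr (.refl _))⟩

theorem nonempty_homeomorph_of_isClopen_locallyCompactPart [PolishSpace Y] [Nonempty Y]
    [PerfectSpace Y] (hzd : IsTopologicalBasis {U : Set Y | IsClopen U})
    (hV : IsClopen (locallyCompactPart Y)) (x : ℕ → Bool) :
    Nonempty (Y ≃ₜ (ℕ → Bool)) ∨
    Nonempty (Y ≃ₜ (ℕ → ℕ)) ∨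
    Nonempty (Y ≃ₜ {y : ℕ → Bool | y ≠ x}) ∨
    Nonempty (Y ≃ₜ (ℕ → ℕ) ⊕ (ℕ → Bool)) ∨
    Nonempty (Y ≃ₜ (ℕ → ℕ) ⊕ {y : ℕ → Bool | y ≠ x}) := by
  rcases (locallyCompactPart Y).eq_empty_or_nonempty with eq_empty | nonempty
  · exact .inr (.inl (nonempty_homeomorph_baire_of_locallyCompactPart_eq_empty hzd eq_empty))
  by_cases eq_univ : locallyCompactPart Y = univ
  · have := weaklyLocallyCompactSpace_of_locallyCompactPart_eq_univ eq_univ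
    have := nonempty_homeomorph_cantor_or_cantor_diff_singleton x hzd
    tauto
  · have := nonempty.to_subtype
    have := perfectSpace_subtype_of_isOpen hV.isOpen
    have : WeaklyLocallyCompactSpace (locallyCompactPart Y) :=
      weaklyLocallyCompactSpace_of_locallyCompactPart_eq_univ <| by
        rw [← preimage_val_locallyCompactPart hV, Subtype.coe_preimage_self]
    obtain ⟨e⟩ := nonempty_homeomorph_baire_sum hzd hV eq_univ
    rcases nonempty_homeomorph_cantor_or_cantor_diff_singleton x
      (isTopologicalBasis_isClopen_subtype hzd (locallyCompactPart Y)) with ⟨⟨e'⟩⟩ | ⟨⟨e'⟩⟩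
    · exact .inr (.inr (.inr (.inl ⟨e.trans ((Homeomorph.refl _).sumCongr e')⟩)))
    · exact .inr (.inr (.inr (.inr ⟨e.trans ((Homeomorph.refl _).sumCongr e')⟩)))

end LocallyCompactPart

/-- A nonempty zero-dimensional Borel CDH subspace of a Polish space without isolated
points is homeomorphic to one of: the Cantor space `2^ℕ`, the Baire space `ℕ^ℕ`,
`2^ℕ ∖ {0}`, `ℕ^ℕ ⊕ 2^ℕ`, or `ℕ^ℕ ⊕ (2^ℕ ∖ {0})`. -/
theorem zeroDim_borel_CDH_classification
    (P : Type*) [TopologicalSpace P] [PolishSpace P]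
    [MeasurableSpace P] [BorelSpace P] (X : Set P)
    (hne : X.Nonempty)
    (hB : MeasurableSet X)
    (hiso : ∀ x : ↥X, ¬ IsOpen ({x} : Set ↥X))
    (hzd : TopologicalSpace.IsTopologicalBasis {U : Set ↥X | IsClopen U})
    (hCDH : IsCDH ↥X) :
    Nonempty (↥X ≃ₜ (ℕ → Bool)) ∨
    Nonempty (↥X ≃ₜ (ℕ → ℕ)) ∨
    Nonempty (↥X ≃ₜ ↥{y : ℕ → Bool | y ≠ fun _ => false}) ∨
    Nonempty (↥X ≃ₜ ((ℕ → ℕ) ⊕ (ℕ → Bool))) ∨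
    Nonempty (↥X ≃ₜ ((ℕ → ℕ) ⊕ ↥{y : ℕ → Bool | y ≠ fun _ => false})) := by
  have := hB.standardBorel
  have := hne.to_subtype
  have := perfectSpace_iff_not_isOpen_singleton.2 hiso
  have := hCDH.polishSpace
  exact nonempty_homeomorph_of_isClopen_locallyCompactPart hzd
    (hCDH.isClopen_of_isOpen isOpen_locallyCompactPart fun h =>
      preimage_locallyCompactPart h.isClosedEmbedding h.isOpenMap) _
end

section
/- The cardinal 𝔭 equals the least cardinal κ such that the product space 2^κ = Bool^I (for an index set I of cardinality κ, with the product topology) is not countable dense homogeneous; that is, 2^κ is CDH for every cardinal κ < 𝔭, and 2^𝔭 is not CDH. -/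
/-- The pseudo-intersection number `𝔭`: the minimal cardinality of a centered family of
infinite subsets of `ℕ` with no infinite pseudo-intersection. -/
noncomputable def pseudoIntersectionNumber : Cardinal :=
  sInf {c : Cardinal |
    ∃ F : Set (Set ℕ), Cardinal.mk F = c ∧
      (∀ A ∈ F, A.Infinite) ∧
      (∀ G : Finset (Set ℕ), ↑G ⊆ F → G.Nonempty → (⋂ A ∈ G, A).Infinite) ∧
      ¬ ∃ A : Set ℕ, A.Infinite ∧ ∀ B ∈ F, (A \ B).Finite}

/-!
Let `D` and `D'` be countable dense sets in a power of a discrete group. If there are fewer than `𝔭`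
coordinates, then countably many requests for a point of `D'` that matches a given target on a given
finite set of coordinates can be met in such a way that every coordinate is matched for all but
finitely many requests. With such choices, a back-and-forth that copies the shift `d' - d` of the
nearest pair treated so far builds a bijection `D ≃ D'`. It is triangular along a sequence of
coordinates separating the points of `D ∪ D'`, and at any other coordinate its shift depends on
finitely many coordinates, because only finitely many steps are exceptional there. So it is
uniformly continuous in both directions and extends to a homeomorphism.

With `𝔭` coordinates, let `A i` be a centered family without pseudo-intersection, indexed by them.
A sequence of points supported on sets `{i | m ∈ A i}` with `m ∉ ⋂ i, A i` never converges to a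
nonzero constant point, since the values of `m` would form a pseudo-intersection. Thus a constant
point together with densely many such points is a countable dense set with a point that is not the
limit of a sequence of other points. Some other countable dense set has no such point.
-/

section PseudoIntersection

open Cardinal Filter

/-- A family is centered if all its finite subfamilies, including the empty one, have infinite
intersection. -/
def IsCentered {J W : Type*} (A : J → Set W) : Prop :=
  ∀ F : Finset J, (⋂ j ∈ F, A j).Infinite

/-- The existence of an infinite set that is contained in each member of the family up to
finitely many points. -/
def HasPseudoIntersection {J W : Type*} (A : J → Set W) : Prop :=
  ∃ X : Set W, X.Infinite ∧ ∀ j, (X \ A j).Finite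

section Family

variable {J V W : Type*} {A : J → Set W}

lemma IsCentered.infinite (hA : IsCentered A) (j : J) : (A j).Infinite := by
  simpa using hA {j}

lemma IsCentered.preimage_equiv (hA : IsCentered A) (e : V ≃ W) :
    IsCentered fun j => e ⁻¹' A j := fun F => by
  rw [← Set.preimage_iInter₂]
  exact (hA F).preimage (by simp)

lemma HasPseudoIntersection.of_preimage_equiv (e : V ≃ W)
    (h : HasPseudoIntersection fun j => e ⁻¹' A j) : HasPseudoIntersection A := by
  obtain ⟨X, hX, hXA⟩ := h
  refine ⟨e '' X, hX.image e.injective.injOn, fun j => ((hXA j).image e).subset ?_⟩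
  rintro _ ⟨⟨x, hx, rfl⟩, hxj⟩
  exact ⟨x, ⟨hx, hxj⟩, rfl⟩

lemma finite_iInter_of_not_hasPseudoIntersection (hA : ¬ HasPseudoIntersection A) :
    (⋂ j, A j).Finite := by
  by_contra hinf
  refine hA ⟨⋂ j, A j, hinf, fun j => ?_⟩
  rw [Set.sdiff_eq_empty.2 (Set.iInter_subset A j)]
  exact Set.finite_empty

lemma IsCentered.infinite_index (hA : IsCentered A) (hA' : ¬ HasPseudoIntersection A) :
    Infinite J := by
  refine not_finite_iff_infinite.1 fun _ => ?_
  have := Fintype.ofFinite J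
  exact hA Finset.univ (by simpa using finite_iInter_of_not_hasPseudoIntersection hA')

lemma hasPseudoIntersection_of_eventually_mem {m : ℕ → W} (hm : ∀ n, m n ∉ ⋂ j, A j)
    (hmA : ∀ j, ∀ᶠ n in atTop, m n ∈ A j) : HasPseudoIntersection A := by
  refine ⟨Set.range m, fun hfin => ?_, fun j => ?_⟩
  · have : Finite (Set.range m) := hfin
    have hout : ∀ v : Set.range m, ∃ j, v.1 ∉ A j := by simpa using hm
    choose j hj using hout
    obtain ⟨n, hn⟩ := (eventually_all.2 fun v => hmA (j v)).exists
    exact hj ⟨m n, n, rfl⟩ (hn _)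
  · have hfin : {n | m n ∉ A j}.Finite := by
      rw [← Nat.cofinite_eq_atTop] at hmA
      exact hmA j
    refine (hfin.image m).subset ?_
    rintro _ ⟨⟨n, rfl⟩, hn⟩
    exact ⟨n, hn, rfl⟩

end Family

theorem IsCentered.hasPseudoIntersection {J W : Type} [Countable W] {A : J → Set W}
    (hA : IsCentered A) (hJ : #J < pseudoIntersectionNumber) : HasPseudoIntersection A := by
  classical
  have : Infinite W := Set.infinite_univ_iff.1 (by simpa using hA ∅)
  obtain ⟨_⟩ := nonempty_denumerable W
  let e : ℕ ≃ W := (Denumerable.eqv W).symm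
  set B : J → Set ℕ := fun j => e ⁻¹' A j
  have hB : IsCentered B := hA.preimage_equiv e
  suffices HasPseudoIntersection B from this.of_preimage_equiv e
  by_contra hB'
  refine (mk_range_le.trans_lt hJ).not_ge (csInf_le' ⟨Set.range B, rfl, ?_, ?_, ?_⟩)
  · exact Set.forall_mem_range.2 hB.infinite
  · intro F hF _
    rw [← Set.image_univ, Finset.subset_set_image_iff] at hF
    obtain ⟨s, -, rfl⟩ := hF
    rw [Finset.set_biInter_finset_image]
    exact hB s
  · simpa only [HasPseudoIntersection, Set.forall_mem_range] using hB'

lemma not_hasPseudoIntersection_ultrafilter {W : Type*} (U : Ultrafilter W) :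
    ¬ HasPseudoIntersection fun A : {A : Set W // A ∈ U} => A.1 := by
  rintro ⟨X, hX, hXU⟩
  obtain ⟨t, u, rfl, htu, hcard⟩ := hX.exists_union_disjoint_cardinal_eq_of_infinite
  have huinf : ¬ u.Finite := fun hu => by
    have ht : t.Finite := by rwa [← lt_aleph0_iff_set_finite, hcard, lt_aleph0_iff_set_finite]
    exact hX (ht.union hu)
  have htinf : ¬ t.Finite := fun ht => huinf <| by
    rwa [← lt_aleph0_iff_set_finite, ← hcard, lt_aleph0_iff_set_finite]
  rcases U.mem_or_compl_mem t with ht | ht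
  · exact huinf ((hXU ⟨t, ht⟩).subset fun x hx => ⟨Or.inr hx, htu.notMem_of_mem_right hx⟩)
  · exact htinf ((hXU ⟨tᶜ, ht⟩).subset fun x hx => ⟨Or.inl hx, not_not_intro hx⟩)

lemma isCentered_hyperfilter {W : Type*} [Infinite W] :
    IsCentered fun A : {A : Set W // A ∈ hyperfilter W} => A.1 := fun F hF =>
  hF.notMem_hyperfilter ((biInter_finset_mem F).2 fun A _ => A.2)

theorem exists_isCentered_not_hasPseudoIntersection {I : Type}
    (hI : #I = pseudoIntersectionNumber) :
    ∃ A : I → Set ℕ, A.Injective ∧ IsCentered A ∧ ¬ HasPseudoIntersection A := by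
  classical
  obtain ⟨𝒜, h𝒜, -, hcent, hpseudo⟩ :
      pseudoIntersectionNumber ∈ _ := csInf_mem <| by
    refine ⟨_, {A | A ∈ hyperfilter ℕ}, rfl, ?_, ?_, ?_⟩
    · exact fun A hA => isCentered_hyperfilter.infinite ⟨A, hA⟩
    · exact fun F hF _ hfin => hfin.notMem_hyperfilter ((biInter_finset_mem F).2 hF)
    · simpa [HasPseudoIntersection] using not_hasPseudoIntersection_ultrafilter (hyperfilter ℕ)
  obtain ⟨e⟩ := Cardinal.eq.1 (hI.trans h𝒜.symm)
  refine ⟨fun i => e i, Subtype.val_injective.comp e.injective, fun F => ?_, ?_⟩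
  · rcases F.eq_empty_or_nonempty with rfl | hF
    · simpa using Set.infinite_univ
    · simpa only [Finset.set_biInter_finset_image] using hcent (F.image fun i => (e i : Set ℕ))
        (by simp [Set.subset_def]) (hF.image _)
  · rintro ⟨X, hX, hXA⟩
    exact hpseudo ⟨X, hX, fun A hA => by simpa using hXA (e.symm ⟨A, hA⟩)⟩

theorem exists_forall_eventually_mem_of_mk_lt {J S : Type} [Infinite J] [Countable S]
    (hJ : #J < pseudoIntersectionNumber) {W : S → Type} [∀ s, Countable (W s)]
    (C : ∀ s, J → Set (W s)) (hC : ∀ s (F : Finset J), (⋂ j ∈ F, C s j).Nonempty) :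
    ∃ w : ∀ s, W s, ∀ j, ∀ᶠ s in cofinite, w s ∈ C s j := by
  classical
  choose w₀ hw₀ using hC
  rcases finite_or_infinite S with _ | _
  · exact ⟨fun s => w₀ s ∅, fun j => by simp⟩
  let A : J ⊕ S → Set (Σ F : Finset S, ∀ s : F, W s) :=
    Sum.elim (fun j => {x | ∀ s : x.1, x.2 s ∈ C s j}) fun s => {x | s ∈ x.1}
  have hA : IsCentered A := by
    intro F hfin
    obtain ⟨s, hs⟩ := (hfin.biUnion fun x _ => x.1.finite_toSet).exists_notMem
    let x : Σ F : Finset S, ∀ s : F, W s :=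
      ⟨insert s F.toRight, fun r => w₀ r F.toLeft⟩
    refine hs (Set.mem_biUnion (x := x) (Set.mem_iInter₂.2 ?_) (Finset.mem_insert_self _ _))
    rintro (j | r) hF
    · exact fun r => Set.mem_iInter₂.1 (hw₀ r _) j (Finset.mem_toLeft.2 hF)
    · exact Finset.mem_insert_of_mem (Finset.mem_toRight.2 hF)
  have hcard : #(J ⊕ S) < pseudoIntersectionNumber := by
    rwa [mk_sum, lift_id, lift_id,
      add_eq_left (aleph0_le_mk J) (mk_le_aleph0.trans (aleph0_le_mk J))]
  obtain ⟨X, hX, hXA⟩ := hA.hasPseudoIntersection hcard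
  have hsel : ∀ s, ∃ x ∈ X, s ∈ x.1 := fun s => by
    obtain ⟨x, hx, hxA⟩ := (hX.sdiff (hXA (Sum.inr s))).nonempty
    exact ⟨x, hx, by_contra fun hs => hxA ⟨hx, hs⟩⟩
  choose x hxX hsx using hsel
  refine ⟨fun s => (x s).2 ⟨s, hsx s⟩, fun j => ?_⟩
  refine ((hXA (Sum.inl j)).biUnion fun y _ => y.1.finite_toSet).subset fun s hs => ?_
  exact Set.mem_biUnion (x := x s) ⟨hxX s, fun hj => hs (hj ⟨s, hsx s⟩)⟩ (hsx s)

end PseudoIntersection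

section DiscreteProduct

open Filter Topology

lemma dense_pi_iff_exists_eqOn {I G : Type*} [TopologicalSpace G] [DiscreteTopology G]
    {D : Set (I → G)} : Dense D ↔ ∀ (t : I → G) (s : Finset I), ∃ d ∈ D, Set.EqOn d t s := by
  refine forall_congr' fun t => ?_
  have hbasis : (𝓝 t).HasBasis Set.Finite fun s => {d | Set.EqOn d t s} := by
    simp only [nhds_pi, nhds_discrete]
    exact hasBasis_pi_pure t
  rw [mem_closure_iff_nhds_basis hbasis]
  exact ⟨fun h s => h s s.finite_toSet, fun h s hs => by simpa using h hs.toFinset⟩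

lemma exists_countable_dense_pi {I G : Type*} [TopologicalSpace G] [DiscreteTopology G]
    [Countable G] [Nonempty I] {A : I → Set ℕ} (hA : A.Injective) :
    ∃ D : Set (I → G), D.Countable ∧ Dense D := by
  classical
  let d : (Σ n : ℕ, ((Fin n → Prop) → G)) → I → G := fun x i => x.2 fun k => (k : ℕ) ∈ A i
  refine ⟨Set.range d, Set.countable_range d, dense_pi_iff_exists_eqOn.2 fun t s => ?_⟩
  have hsep : ∀ᶠ n : ℕ in atTop, ∀ i ∈ s, ∀ j ∈ s,
      (∀ k < n, k ∈ A i ↔ k ∈ A j) → i = j := by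
    refine (eventually_all_finset s).2 fun i _ => (eventually_all_finset s).2 fun j _ => ?_
    by_cases hij : i = j
    · exact Eventually.of_forall fun _ _ => hij
    obtain ⟨k, hk⟩ := not_forall.1 fun h => hij (hA (Set.ext h))
    exact (eventually_gt_atTop k).mono fun n hn h => (hk (h k hn)).elim
  obtain ⟨n, hn⟩ := hsep.exists
  let trace : I → Fin n → Prop := fun i k => (k : ℕ) ∈ A i
  have htrace : Set.InjOn trace s := fun i hi j hj hij =>
    hn i hi j hj fun k hk => iff_of_eq (congrFun hij ⟨k, hk⟩)
  exact ⟨_, ⟨⟨n, t ∘ Function.invFunOn trace s⟩, rfl⟩, fun i hi =>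
    congrArg t (htrace.leftInvOn_invFunOn hi)⟩

end DiscreteProduct

section Extension

open Topology

lemma exists_homeomorph_image_eq_of_uniformEquiv {X : Type*} [UniformSpace X] [CompleteSpace X]
    [T0Space X] {D D' : Set X} (hD : Dense D) (hD' : Dense D') (e : D ≃ᵤ D') :
    ∃ h : X ≃ₜ X, h '' D = D' := by
  let completion {S : Set X} (hS : Dense S) : AbstractCompletion S :=
    ⟨X, (↑), inferInstance, inferInstance, inferInstance, isUniformInducing_val S,
      hS.denseRange_val⟩
  let h := (completion hD).mapEquiv (completion hD') e
  have hh : ∀ z : D, h z = e z := (completion hD).mapEquiv_coe (completion hD') e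
  refine ⟨h.toHomeomorph, ?_⟩
  calc h '' D = Set.range fun z : D => h z := Set.image_eq_range h D
    _ = Set.range fun z : D => (e z : X) := by simp only [hh]
    _ = D' := by rw [← Function.comp_def, e.surjective.range_comp, Subtype.range_coe]

lemma uniformContinuous_pi_of_eqOn {I J G H : Type*} [UniformSpace G] [DiscreteUniformity G]
    [UniformSpace H] {D : Set (I → G)} {f : D → J → H}
    (hf : ∀ a, ∃ s : Finset I, ∀ x y : D, Set.EqOn (x : I → G) y s → f x a = f y a) :
    UniformContinuous f := by
  refine uniformContinuous_pi.2 fun a => Filter.tendsto_iff_forall_eventually_mem.2 fun U hU => ?_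
  obtain ⟨s, hs⟩ := hf a
  have hev : ∀ᶠ p in uniformity D, ∀ i ∈ s, (p.1 : I → G) i = p.2.1 i :=
    (Filter.eventually_all_finset s).2 fun i _ =>
      ((Pi.uniformContinuous_proj (fun _ => G) i).comp uniformContinuous_subtype_val).eventually
        (DiscreteUniformity.relId_mem_uniformity G)
  filter_upwards [hev] with p hp
  exact hs p.1 p.2 hp ▸ refl_mem_uniformity hU

end Extension

section Shift

variable {I G : Type*} [AddCommGroup G] {b : ℕ → I} {D D' : Set (I → G)}

/-- For a relation `R` between points of `D` and points of `D'`, the coordinate at `a` of the shift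
`z.2 - z.1` of a pair `z ∈ R` depends only on the coordinates of `z.1` at `b 0, …, b (N - 1)`. -/
def ShiftDeterminedBy (b : ℕ → I) (R : Set (D × D')) (N : ℕ) (a : I) : Prop :=
  ∀ z ∈ R, ∀ w ∈ R, PiNat.cylinder (z.1.1 ∘ b) N = PiNat.cylinder (w.1.1 ∘ b) N →
    z.2.1 a - z.1.1 a = w.2.1 a - w.1.1 a

/-- Along the sequence of coordinates `b`, the relation `R` acts as a triangular map: the shift at
the `n`-th coordinate depends only on the preceding coordinates. -/
def IsTriangular (b : ℕ → I) (R : Set (D × D')) : Prop :=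
  ∀ n, ShiftDeterminedBy b R n (b n)

lemma ShiftDeterminedBy.insert {R : Set (D × D')} {N : ℕ} {a : I} {q : D} {q' : D'} {u : D × D'}
    (h : ShiftDeterminedBy b R N a) (hu : u ∈ R)
    (hmax : ∀ w ∈ R, PiNat.cylinder (w.1.1 ∘ b) N = PiNat.cylinder (q.1 ∘ b) N →
      PiNat.cylinder (u.1.1 ∘ b) N = PiNat.cylinder (q.1 ∘ b) N)
    (hq : PiNat.cylinder (u.1.1 ∘ b) N = PiNat.cylinder (q.1 ∘ b) N →
      q'.1 a - q.1 a = u.2.1 a - u.1.1 a) :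
    ShiftDeterminedBy b (insert (q, q') R) N a := by
  have key : ∀ w ∈ R, PiNat.cylinder (w.1.1 ∘ b) N = PiNat.cylinder (q.1 ∘ b) N →
      w.2.1 a - w.1.1 a = q'.1 a - q.1 a := fun w hw hwq =>
    (h w hw u hu (hwq.trans (hmax w hw hwq).symm)).trans (hq (hmax w hw hwq)).symm
  rintro z (rfl | hz) w (rfl | hw) hzw
  · rfl
  · exact (key w hw hzw.symm).symm
  · exact key z hz hzw
  · exact h z hz w hw hzw

lemma exists_shiftDeterminedBy_of_finite {R : Set (D × D')} (hb : D.InjOn (· ∘ b))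
    (hR : R.Finite) (hfst : R.InjOn Prod.fst) (a : I) : ∃ N, ShiftDeterminedBy b R N a := by
  have hsep : ∀ᶠ N in Filter.atTop, ∀ z ∈ R, ∀ w ∈ R,
      PiNat.cylinder (z.1.1 ∘ b) N = PiNat.cylinder (w.1.1 ∘ b) N → z = w := by
    refine (Filter.eventually_all_finite hR).2 fun z hz =>
      (Filter.eventually_all_finite hR).2 fun w hw => ?_
    by_cases hzw : z = w
    · exact Filter.Eventually.of_forall fun _ _ => hzw
    have hne : z.1.1 ∘ b ≠ w.1.1 ∘ b := fun h =>
      hzw (hfst hz hw (Subtype.ext (hb z.1.2 w.1.2 h)))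
    refine (Filter.eventually_gt_atTop (PiNat.firstDiff (z.1.1 ∘ b) (w.1.1 ∘ b))).mono
      fun N hN h => ?_
    rw [← PiNat.mem_cylinder_iff_eq, PiNat.mem_cylinder_iff_le_firstDiff hne] at h
    exact absurd h hN.not_ge
  obtain ⟨N, hN⟩ := hsep.exists
  exact ⟨N, fun z hz w hw hzw => hN z hz w hw hzw ▸ rfl⟩

namespace IsTriangular

variable {R : Set (D × D')}

lemma cylinder_eq_iff (hR : IsTriangular b R) {z w : D × D'} (hz : z ∈ R) (hw : w ∈ R) (N : ℕ) :
    PiNat.cylinder (z.1.1 ∘ b) N = PiNat.cylinder (w.1.1 ∘ b) N ↔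
      PiNat.cylinder (z.2.1 ∘ b) N = PiNat.cylinder (w.2.1 ∘ b) N := by
  induction N with
  | zero => simp
  | succ N ih =>
    simp only [← PiNat.mem_cylinder_iff_eq, PiNat.mem_cylinder_iff, Nat.forall_lt_succ_right,
      Function.comp_apply] at ih ⊢
    rw [← ih]
    refine and_congr_right fun h => ?_
    have hshift := hR N z hz w hw (PiNat.mem_cylinder_iff_eq.1 h)
    rw [sub_eq_sub_iff_sub_eq_sub] at hshift
    rw [← sub_eq_zero, ← hshift, sub_eq_zero]

lemma shiftDeterminedBy_swap (hR : IsTriangular b R) {N : ℕ} {a : I}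
    (h : ShiftDeterminedBy b R N a) : ShiftDeterminedBy b (Prod.swap '' R) N a := by
  rintro _ ⟨z, hz, rfl⟩ _ ⟨w, hw, rfl⟩ hzw
  have hshift := h z hz w hw ((hR.cylinder_eq_iff hz hw N).2 hzw)
  simpa only [neg_sub, Prod.fst_swap, Prod.snd_swap] using congrArg Neg.neg hshift

lemma swap (hR : IsTriangular b R) : IsTriangular b (Prod.swap '' R) := fun n =>
  hR.shiftDeterminedBy_swap (hR n)

lemma injOn_fst (hR : IsTriangular b R) (hb : D'.InjOn (· ∘ b)) : R.InjOn Prod.fst := by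
  intro z hz w hw hzw
  refine Prod.ext hzw (Subtype.ext (hb z.2.2 w.2.2 (funext fun n => ?_)))
  have hcyl := (hR.cylinder_eq_iff hz hw (n + 1)).1 (by rw [hzw])
  exact PiNat.mem_cylinder_iff.1 (PiNat.mem_cylinder_iff_eq.2 hcyl) n n.lt_succ_self

end IsTriangular

lemma uniformContinuous_of_shiftDeterminedBy [UniformSpace G] [DiscreteUniformity G]
    {R : Set (D × D')} (hR : ∀ a, ∃ N, ShiftDeterminedBy b R N a) {f : D → D'}
    (hf : ∀ q, (q, f q) ∈ R) : UniformContinuous f := by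
  classical
  refine (isUniformInducing_val D').uniformContinuous_iff.2 <|
    uniformContinuous_pi_of_eqOn fun a => ?_
  obtain ⟨N, hN⟩ := hR a
  refine ⟨insert a ((Finset.range N).image b), fun x y hxy => ?_⟩
  have hcyl : PiNat.cylinder (x.1 ∘ b) N = PiNat.cylinder (y.1 ∘ b) N :=
    PiNat.mem_cylinder_iff_eq.1 <| PiNat.mem_cylinder_iff.2 fun i hi =>
      hxy <| Finset.mem_insert_of_mem <| Finset.mem_image_of_mem b (Finset.mem_range.2 hi)
  have hshift := hN _ (hf x) _ (hf y) hcyl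
  have hxya : x.1 a = y.1 a := hxy (Finset.mem_insert_self _ _)
  simpa only [hxya, sub_left_inj, Function.comp_apply] using hshift

theorem nonempty_uniformEquiv_of_isTriangular [UniformSpace G] [DiscreteUniformity G]
    {R : Set (D × D')} (hR : IsTriangular b R) (hdet : ∀ a, ∃ N, ShiftDeterminedBy b R N a)
    (hb : D.InjOn (· ∘ b)) (hb' : D'.InjOn (· ∘ b)) (hfst : Prod.fst '' R = Set.univ)
    (hsnd : Prod.snd '' R = Set.univ) : Nonempty (D ≃ᵤ D') := by
  have hfst' : ∀ q : D, ∃ q', (q, q') ∈ R := by simpa [Set.eq_univ_iff_forall] using hfst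
  have hsnd' : ∀ q' : D', ∃ q, (q, q') ∈ R := by simpa [Set.eq_univ_iff_forall] using hsnd
  choose f hf using hfst'
  choose g hg using hsnd'
  have hgf : ∀ q, g (f q) = q := fun q =>
    congrArg Prod.snd (hR.swap.injOn_fst hb ⟨_, hg (f q), rfl⟩ ⟨_, hf q, rfl⟩ rfl)
  have hfg : ∀ q', f (g q') = q' := fun q' =>
    congrArg Prod.snd (hR.injOn_fst hb' (hf (g q')) (hg q') rfl)
  have hdet' : ∀ a, ∃ N, ShiftDeterminedBy b (Prod.swap '' R) N a := fun a =>
    (hdet a).imp fun _ => hR.shiftDeterminedBy_swap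
  exact ⟨⟨f, g, hgf, hfg⟩, uniformContinuous_of_shiftDeterminedBy hdet hf,
    uniformContinuous_of_shiftDeterminedBy hdet' fun q' => ⟨_, hg q', rfl⟩⟩

end Shift

section BackAndForth

variable {I G : Type*} [AddCommGroup G] {b : ℕ → I} {D D' : Set (I → G)}

/-- A rule sending a point `q` of `D` and a pair `(u, u')` to a point of `D'` whose shift from `q`
agrees with that of `(u, u')` at `b i` for all `i` up to the first difference of `q` and `u` along
`b`, and at each coordinate of `I` for all but finitely many inputs. -/
structure ShiftExtender (b : ℕ → I) (D D' : Set (I → G)) where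
  extend : D × D × D' → D'
  extend_sub_eq : ∀ q u u', ∀ i ≤ PiNat.firstDiff (q.1 ∘ b) (u.1 ∘ b),
    (extend (q, u, u')).1 (b i) - q.1 (b i) = u'.1 (b i) - u.1 (b i)
  finite_setOf_ne : ∀ a, {s | (extend s).1 a - s.1.1 a ≠ s.2.2.1 a - s.2.1.1 a}.Finite

/-- The finitely many points whose extension may disturb the shift at the coordinate `a`. -/
def ShiftExtender.exceptions (E : ShiftExtender b D D') (a : I) : Set D :=
  Prod.fst '' {s | (E.extend s).1 a - s.1.1 a ≠ s.2.2.1 a - s.2.1.1 a}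

lemma ShiftExtender.finite_exceptions (E : ShiftExtender b D D') (a : I) :
    (E.exceptions a).Finite :=
  (E.finite_setOf_ne a).image _

theorem nonempty_shiftExtender {I G : Type} [Infinite I] [AddCommGroup G] [TopologicalSpace G]
    [DiscreteTopology G] (hI : Cardinal.mk I < pseudoIntersectionNumber) (b : ℕ → I)
    {D D' : Set (I → G)} (hD : D.Countable) (hD'c : D'.Countable) (hD' : Dense D') :
    Nonempty (ShiftExtender b D D') := by
  classical
  have := hD.to_subtype
  have := hD'c.to_subtype
  let target : D × D × D' → I → G := fun s => s.1.1 + (s.2.2.1 - s.2.1.1)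
  let N : D × D × D' → Finset I := fun s =>
    (Finset.range (PiNat.firstDiff (s.1.1 ∘ b) (s.2.1.1 ∘ b) + 1)).image b
  have hdense := dense_pi_iff_exists_eqOn.1 hD'
  obtain ⟨w, hw⟩ := exists_forall_eventually_mem_of_mk_lt hI
    (W := fun s => {d : D' // Set.EqOn d.1 (target s) (N s)})
    (fun s a => {d | d.1.1 a = target s a}) fun s F => by
      obtain ⟨d, hd, hdt⟩ := hdense (target s) (N s ∪ F)
      rw [Finset.coe_union, Set.eqOn_union] at hdt
      exact ⟨⟨⟨d, hd⟩, hdt.1⟩, Set.mem_iInter₂.2 hdt.2⟩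
  refine ⟨fun s => (w s).1, fun q u u' i hi => sub_eq_of_eq_add' ?_, fun a => ?_⟩
  · exact (w (q, u, u')).2 (Finset.mem_image_of_mem b (Finset.mem_range.2 (Nat.lt_succ_of_le hi)))
  · exact (hw a).subset fun s hs h => hs (sub_eq_of_eq_add' h)

/-- A finite approximation to the homeomorphism built by back-and-forth; the extenders `E` and `E'`
used for the steps forth and back determine the order on approximations. -/
@[ext]
structure PartialShift (E : ShiftExtender b D D') (E' : ShiftExtender b D' D) where
  pairs : Set (D × D')
  finite : pairs.Finite
  nonempty : pairs.Nonempty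
  isTriangular : IsTriangular b pairs

namespace PartialShift

variable {E : ShiftExtender b D D'} {E' : ShiftExtender b D' D}

/-- Once all exceptions at `a` are covered, no further extension step disturbs the shift at `a`. -/
instance : Preorder (PartialShift E E') where
  le P Q := P.pairs ⊆ Q.pairs ∧ ∀ a N, E.exceptions a ⊆ Prod.fst '' P.pairs →
    E'.exceptions a ⊆ Prod.snd '' P.pairs →
    ShiftDeterminedBy b P.pairs N a → ShiftDeterminedBy b Q.pairs N a
  le_refl P := ⟨subset_rfl, fun _ _ _ _ => id⟩
  le_trans P Q S hPQ hQS := ⟨hPQ.1.trans hQS.1, fun a N h h' hP =>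
    hQS.2 a N (h.trans (Set.image_mono hPQ.1)) (h'.trans (Set.image_mono hPQ.1))
      (hPQ.2 a N h h' hP)⟩

/-- The starting point of the back-and-forth. -/
def singleton (q : D) (q' : D') : PartialShift E E' where
  pairs := {(q, q')}
  finite := Set.finite_singleton _
  nonempty := Set.singleton_nonempty _
  isTriangular := by rintro n z rfl w rfl _; rfl

/-- The inverse relation, which exchanges the steps forth and back. -/
def swap (P : PartialShift E E') : PartialShift E' E where
  pairs := Prod.swap '' P.pairs
  finite := P.finite.image _
  nonempty := P.nonempty.image _
  isTriangular := P.isTriangular.swap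

@[simp]
lemma swap_swap (P : PartialShift E E') : P.swap.swap = P := by
  ext1
  simp [swap, Set.image_image]

lemma swap_le_swap {P Q : PartialShift E E'} (h : P ≤ Q) : P.swap ≤ Q.swap := by
  refine ⟨Set.image_mono h.1, fun a N hE' hE hP => ?_⟩
  have hP' : ShiftDeterminedBy b P.swap.swap.pairs N a :=
    P.swap.isTriangular.shiftDeterminedBy_swap hP
  rw [swap_swap] at hP'
  simp only [swap, Set.image_image, Prod.fst_swap, Prod.snd_swap] at hE hE'
  exact Q.isTriangular.shiftDeterminedBy_swap (h.2 a N hE hE' hP')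

lemma exists_ge_mem_fst (hb : D.InjOn (· ∘ b)) (P : PartialShift E E') (q : D) :
    ∃ Q ≥ P, q ∈ Prod.fst '' Q.pairs := by
  by_cases hq : q ∈ Prod.fst '' P.pairs
  · exact ⟨P, le_rfl, hq⟩
  obtain ⟨u, hu, hmax⟩ := Set.exists_max_image P.pairs
    (fun w => PiNat.firstDiff (q.1 ∘ b) (w.1.1 ∘ b)) P.finite P.nonempty
  have hcyl : ∀ w ∈ P.pairs, ∀ N, PiNat.cylinder (w.1.1 ∘ b) N = PiNat.cylinder (q.1 ∘ b) N ↔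
      N ≤ PiNat.firstDiff (q.1 ∘ b) (w.1.1 ∘ b) := by
    intro w hw N
    have hne : q.1 ∘ b ≠ w.1.1 ∘ b := fun h =>
      hq ⟨w, hw, Subtype.ext (hb w.1.2 q.2 h.symm)⟩
    rw [eq_comm, ← PiNat.mem_cylinder_iff_eq, PiNat.mem_cylinder_iff_le_firstDiff hne]
  have hclosest : ∀ N, ∀ w ∈ P.pairs,
      PiNat.cylinder (w.1.1 ∘ b) N = PiNat.cylinder (q.1 ∘ b) N →
        PiNat.cylinder (u.1.1 ∘ b) N = PiNat.cylinder (q.1 ∘ b) N := fun N w hw h =>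
    (hcyl u hu N).2 (((hcyl w hw N).1 h).trans (hmax w hw))
  let Q : PartialShift E E' :=
    { pairs := insert (q, E.extend (q, u)) P.pairs
      finite := P.finite.insert _
      nonempty := Set.insert_nonempty _ _
      isTriangular := fun n => (P.isTriangular n).insert hu (hclosest n) fun h =>
        E.extend_sub_eq q u.1 u.2 n ((hcyl u hu n).1 h) }
  refine ⟨Q, ⟨Set.subset_insert _ _, fun a N hE _ hP => ?_⟩, _, Set.mem_insert _ _, rfl⟩
  exact hP.insert hu (hclosest N) fun _ => by_contra fun hne => hq (hE ⟨(q, u), hne, rfl⟩)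

lemma exists_ge_mem_snd (hb : D'.InjOn (· ∘ b)) (P : PartialShift E E') (q : D') :
    ∃ Q ≥ P, q ∈ Prod.snd '' Q.pairs := by
  obtain ⟨Q, hPQ, hq⟩ := P.swap.exists_ge_mem_fst hb q
  exact ⟨Q.swap, by simpa using swap_le_swap hPQ, by simpa [swap, Set.image_image] using hq⟩

theorem exists_directedOn_cofinal [Countable D] [Countable D'] (hb : D.InjOn (· ∘ b))
    (hb' : D'.InjOn (· ∘ b)) (P₀ : PartialShift E E') :
    ∃ 𝒞 : Set (PartialShift E E'), DirectedOn (· ≤ ·) 𝒞 ∧ 𝒞.Nonempty ∧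
      (∀ q, ∃ P ∈ 𝒞, q ∈ Prod.fst '' P.pairs) ∧ ∀ q', ∃ P ∈ 𝒞, q' ∈ Prod.snd '' P.pairs := by
  have := Encodable.ofCountable (D ⊕ D')
  let 𝒟 : D ⊕ D' → Order.Cofinal (PartialShift E E') := Sum.elim
    (fun q => ⟨{P | q ∈ Prod.fst '' P.pairs},
      fun P => (P.exists_ge_mem_fst hb q).imp fun _ => And.symm⟩)
    (fun q' => ⟨{P | q' ∈ Prod.snd '' P.pairs},
      fun P => (P.exists_ge_mem_snd hb' q').imp fun _ => And.symm⟩)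
  let 𝒞 := Order.idealOfCofinals P₀ 𝒟
  have hmeets : ∀ i, ∃ P ∈ 𝒟 i, P ∈ 𝒞 := Order.cofinal_meets_idealOfCofinals P₀ 𝒟
  exact ⟨𝒞, 𝒞.directed, 𝒞.nonempty, fun q => (hmeets (Sum.inl q)).imp fun _ => And.symm,
    fun q' => (hmeets (Sum.inr q')).imp fun _ => And.symm⟩

section Directed

variable {𝒞 : Set (PartialShift E E')}

lemma shiftDeterminedBy_biUnion (hdir : DirectedOn (· ≤ ·) 𝒞) {N : ℕ} {a : I}
    {P : PartialShift E E'} (hP : P ∈ 𝒞)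
    (h : ∀ Q ∈ 𝒞, P ≤ Q → ShiftDeterminedBy b Q.pairs N a) :
    ShiftDeterminedBy b (⋃ Q ∈ 𝒞, Q.pairs) N a := by
  intro z hz w hw
  obtain ⟨Q, hQ, hzQ⟩ := Set.mem_iUnion₂.1 hz
  obtain ⟨S, hS, hwS⟩ := Set.mem_iUnion₂.1 hw
  obtain ⟨T, hT, hQT, hST⟩ := hdir Q hQ S hS
  obtain ⟨U, hU, hPU, hTU⟩ := hdir P hP T hT
  exact h U hU hPU z (hTU.1 (hQT.1 hzQ)) w (hTU.1 (hST.1 hwS))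

lemma exists_mem_subset_image_pairs {α : Type*} (hdir : DirectedOn (· ≤ ·) 𝒞)
    (hne : 𝒞.Nonempty) {f : D × D' → α} (hf : ∀ x, ∃ P ∈ 𝒞, x ∈ f '' P.pairs) {s : Set α}
    (hs : s.Finite) :
    ∃ P ∈ 𝒞, s ⊆ f '' P.pairs := by
  have hdir' : DirectedOn (fun P Q => f '' P.pairs ⊆ f '' Q.pairs) 𝒞 :=
    hdir.mono fun _ _ h => Set.image_mono h.1
  lift s to Finset α using hs
  exact hdir'.exists_mem_subset_of_finset_subset_biUnion hne fun x _ =>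
    Set.mem_iUnion₂.2 (by simpa using hf x)

lemma exists_shiftDeterminedBy_biUnion (hdir : DirectedOn (· ≤ ·) 𝒞) (hne : 𝒞.Nonempty)
    (hb : D.InjOn (· ∘ b)) (hb' : D'.InjOn (· ∘ b))
    (hfst : ∀ q, ∃ P ∈ 𝒞, q ∈ Prod.fst '' P.pairs)
    (hsnd : ∀ q', ∃ P ∈ 𝒞, q' ∈ Prod.snd '' P.pairs) (a : I) :
    ∃ N, ShiftDeterminedBy b (⋃ P ∈ 𝒞, P.pairs) N a := by
  obtain ⟨P₁, hP₁, hE⟩ := exists_mem_subset_image_pairs hdir hne hfst (E.finite_exceptions a)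
  obtain ⟨P₂, hP₂, hE'⟩ := exists_mem_subset_image_pairs hdir hne hsnd (E'.finite_exceptions a)
  obtain ⟨P, hP, h₁, h₂⟩ := hdir P₁ hP₁ P₂ hP₂
  obtain ⟨N, hN⟩ := exists_shiftDeterminedBy_of_finite hb P.finite (P.isTriangular.injOn_fst hb') a
  exact ⟨N, shiftDeterminedBy_biUnion hdir hP fun Q _ hPQ => hPQ.2 a N
    (hE.trans (Set.image_mono h₁.1)) (hE'.trans (Set.image_mono h₂.1)) hN⟩

end Directed

theorem nonempty_uniformEquiv [UniformSpace G] [DiscreteUniformity G] (E : ShiftExtender b D D')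
    (E' : ShiftExtender b D' D) (hD : D.Countable) (hD' : D'.Countable) (hDne : D.Nonempty)
    (hD'ne : D'.Nonempty) (hb : D.InjOn (· ∘ b)) (hb' : D'.InjOn (· ∘ b)) :
    Nonempty (D ≃ᵤ D') := by
  have := hD.to_subtype
  have := hD'.to_subtype
  obtain ⟨q, hq⟩ := hDne
  obtain ⟨q', hq'⟩ := hD'ne
  obtain ⟨𝒞, hdir, hne, hfst, hsnd⟩ :=
    exists_directedOn_cofinal (E := E) (E' := E') hb hb' (singleton ⟨q, hq⟩ ⟨q', hq'⟩)
  refine nonempty_uniformEquiv_of_isTriangular (R := ⋃ P ∈ 𝒞, P.pairs)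
    (fun n => shiftDeterminedBy_biUnion hdir hne.some_mem fun Q _ _ => Q.isTriangular n)
    (exists_shiftDeterminedBy_biUnion hdir hne hb hb' hfst hsnd) hb hb' ?_ ?_
  · simpa only [Set.image_iUnion₂, Set.eq_univ_iff_forall, Set.mem_iUnion₂, exists_prop] using hfst
  · simpa only [Set.image_iUnion₂, Set.eq_univ_iff_forall, Set.mem_iUnion₂, exists_prop] using hsnd

end PartialShift

end BackAndForth

lemma exists_injOn_comp_of_countable {I G : Type*} [Nonempty I] {D : Set (I → G)}
    (hD : D.Countable) : ∃ b : ℕ → I, D.InjOn (· ∘ b) := by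
  have hsep : ∀ x y : I → G, ∃ i, x ≠ y → x i ≠ y i := fun x y => by
    by_cases hxy : x = y
    · exact ⟨Classical.arbitrary I, fun h => (h hxy).elim⟩
    · exact (Function.ne_iff.1 hxy).imp fun _ hi _ => hi
  choose sep hsep using hsep
  obtain ⟨b, hb⟩ := Set.countable_iff_exists_subset_range.1
    ((hD.prod hD).image fun p => sep p.1 p.2)
  refine ⟨b, fun x hx y hy hxy => by_contra fun hne => ?_⟩
  obtain ⟨n, hn⟩ := hb ⟨(x, y), ⟨hx, hy⟩, rfl⟩
  have hbn : x (b n) = y (b n) := congrFun hxy n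
  exact hsep x y hne (by rwa [hn] at hbn)

theorem isCDH_pi_of_mk_lt {I G : Type} [Nonempty G] [TopologicalSpace G] [DiscreteTopology G]
    (hI : Cardinal.mk I < pseudoIntersectionNumber) : IsCDH (I → G) := by
  intro D D' hD hDdense hD' hD'dense
  rcases finite_or_infinite I with _ | _
  · exact ⟨Homeomorph.refl _, by rw [dense_discrete.1 hDdense, dense_discrete.1 hD'dense]; simp⟩
  obtain ⟨_⟩ := nonempty_commRing G
  let : UniformSpace G := ⊥
  obtain rfl := DiscreteTopology.eq_bot (α := G)
  obtain ⟨b, hbUnion⟩ := exists_injOn_comp_of_countable (hD.union hD')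
  have hb : D.InjOn (· ∘ b) := hbUnion.mono Set.subset_union_left
  have hb' : D'.InjOn (· ∘ b) := hbUnion.mono Set.subset_union_right
  obtain ⟨E⟩ := nonempty_shiftExtender hI b hD hD' hD'dense
  obtain ⟨E'⟩ := nonempty_shiftExtender hI b hD' hD hDdense
  obtain ⟨e⟩ := PartialShift.nonempty_uniformEquiv E E' hD hD' hDdense.nonempty
    hD'dense.nonempty hb hb'
  exact exists_homeomorph_image_eq_of_uniformEquiv hDdense hD'dense e

section Sequences

open Filter Topology

lemma not_isCDH_of_seqClosure {X : Type*} [TopologicalSpace X] {D E : Set X} {x : X}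
    (hD : D.Countable) (hD' : Dense D) (hE : E.Countable) (hE' : Dense E)
    (hx : x ∉ seqClosure D) (hseq : ∀ y ∈ E, y ∈ seqClosure (E \ {y})) : ¬ IsCDH X := by
  intro hX
  obtain ⟨h, hh⟩ := hX E (insert x D) hE hE' (hD.insert x) (hD'.mono (Set.subset_insert x D))
  obtain ⟨y, hy, rfl⟩ := hh.symm.subset (Set.mem_insert x D)
  obtain ⟨u, hu, hlim⟩ := hseq y hy
  refine hx ⟨h ∘ u, fun n => ?_, (h.continuous.tendsto y).comp hlim⟩
  exact (hh.subset ⟨u n, (hu n).1, rfl⟩).resolve_left (h.injective.ne (hu n).2)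

lemma exists_countable_superset_seqClosure_sdiff {X : Type*} [TopologicalSpace X]
    [AddCommGroup X] [ContinuousAdd X] {D : Set X} (hD : D.Countable) {u : ℕ → X}
    (hu : ∀ n, u n ≠ 0) (hlim : Tendsto u atTop (𝓝 0)) :
    ∃ E : Set X, E.Countable ∧ D ⊆ E ∧ ∀ x ∈ E, x ∈ seqClosure (E \ {x}) := by
  have : Countable (D ∪ Set.range u : Set X) := (hD.union (Set.countable_range u)).to_subtype
  let f : (D ∪ Set.range u : Set X) → X := (↑)
  let E := Submodule.span ℤ (Set.range f)
  have hE : Countable E := inferInstance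
  have hsub : D ∪ Set.range u ⊆ E := Subtype.range_coe.superset.trans Submodule.subset_span
  refine ⟨E, Set.countable_coe_iff.1 hE, Set.subset_union_left.trans hsub, fun x hx => ?_⟩
  refine ⟨fun n => x + u n, fun n => ⟨?_, by simpa using hu n⟩, by simpa using hlim.const_add x⟩
  exact E.add_mem hx (hsub (Or.inr ⟨n, rfl⟩))

lemma exists_ne_zero_tendsto_zero_pi (I G : Type*) [TopologicalSpace G] [Infinite I] [Zero G]
    [Nontrivial G] : ∃ u : ℕ → I → G, (∀ n, u n ≠ 0) ∧ Tendsto u atTop (𝓝 0) := by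
  classical
  obtain ⟨c, hc⟩ := exists_ne (0 : G)
  let b := Infinite.natEmbedding I
  refine ⟨fun n => Pi.single (b n) c, fun n => by simpa using hc, tendsto_pi_nhds.2 fun i => ?_⟩
  have hne : ∀ᶠ n in atTop, b n ≠ i := by
    rw [← Nat.cofinite_eq_atTop]
    exact b.injective.tendsto_cofinite.eventually (eventually_cofinite_ne i)
  exact tendsto_const_nhds.congr' (hne.mono fun n hn => by simp [Pi.single_eq_of_ne' hn])

end Sequences

section Failure

open Cardinal Filter Topology

variable {I G : Type*} {A : I → Set ℕ}

lemma dense_iUnion_indicator [TopologicalSpace G] [DiscreteTopology G] [Zero G] {E : Set (I → G)}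
    (hE : Dense E) (hA : IsCentered A) (hfin : (⋂ i, A i).Finite) :
    Dense (⋃ m ∈ (⋂ i, A i)ᶜ, Set.indicator {i | m ∈ A i} '' E) := by
  refine dense_pi_iff_exists_eqOn.2 fun t s => ?_
  obtain ⟨m, hms, hm⟩ := ((hA s).sdiff hfin).nonempty
  obtain ⟨d, hd, hdt⟩ := dense_pi_iff_exists_eqOn.1 hE t s
  refine ⟨_, Set.mem_biUnion hm ⟨d, hd, rfl⟩, fun i hi => ?_⟩
  have hmi : i ∈ {i | m ∈ A i} := Set.mem_iInter₂.1 hms i hi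
  exact (Set.indicator_of_mem hmi d).trans (hdt hi)

lemma const_notMem_seqClosure_iUnion_indicator [TopologicalSpace G] [DiscreteTopology G] [Zero G]
    (E : Set (I → G)) {c : G} (hc : c ≠ 0) (hA : ¬ HasPseudoIntersection A) :
    (fun _ => c) ∉ seqClosure (⋃ m ∈ (⋂ i, A i)ᶜ, Set.indicator {i | m ∈ A i} '' E) := by
  rintro ⟨x, hx, hlim⟩
  simp only [Set.mem_iUnion, exists_prop] at hx
  choose m hm d _ hx using hx
  refine hA (hasPseudoIntersection_of_eventually_mem hm fun i => ?_)
  have hev : ∀ᶠ n in atTop, x n i = c := by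
    simpa only [nhds_discrete, tendsto_pure] using tendsto_pi_nhds.1 hlim i
  filter_upwards [hev] with n hn
  refine Set.mem_of_indicator_ne_zero (s := {i | m n ∈ A i}) (f := d n) (a := i) ?_
  rwa [hx n, hn]

theorem not_isCDH_pi_of_isCentered [Countable G] [Nontrivial G] [TopologicalSpace G]
    [DiscreteTopology G] (hinj : A.Injective) (hA : IsCentered A)
    (hA' : ¬ HasPseudoIntersection A) : ¬ IsCDH (I → G) := by
  have : Infinite I := hA.infinite_index hA'
  obtain ⟨_⟩ := nonempty_commRing G
  obtain ⟨D, hD, hDdense⟩ := exists_countable_dense_pi (G := G) hinj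
  obtain ⟨u, hu, hlim⟩ := exists_ne_zero_tendsto_zero_pi I G
  obtain ⟨E, hE, hDE, hseq⟩ := exists_countable_superset_seqClosure_sdiff hD hu hlim
  obtain ⟨c, hc⟩ := exists_ne (0 : G)
  exact not_isCDH_of_seqClosure ((Set.to_countable _).biUnion fun m _ => hD.image _)
    (dense_iUnion_indicator hDdense hA (finite_iInter_of_not_hasPseudoIntersection hA')) hE
    (hDdense.mono hDE) (const_notMem_seqClosure_iUnion_indicator D hc hA') hseq

theorem not_isCDH_pi_of_mk_eq {I G : Type} [Countable G] [Nontrivial G] [TopologicalSpace G]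
    [DiscreteTopology G] (hI : #I = pseudoIntersectionNumber) : ¬ IsCDH (I → G) := by
  obtain ⟨A, hinj, hA, hA'⟩ := exists_isCentered_not_hasPseudoIntersection hI
  exact not_isCDH_pi_of_isCentered hinj hA hA'

end Failure

theorem p_eq_min_not_CDH_general (G : Type) [Countable G] [Nontrivial G] [TopologicalSpace G]
    [DiscreteTopology G] :
    pseudoIntersectionNumber =
      sInf {c : Cardinal | ∃ I : Type, Cardinal.mk I = c ∧ ¬ IsCDH (I → G)} ∧
    (∀ I : Type, Cardinal.mk I < pseudoIntersectionNumber → IsCDH (I → G)) ∧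
    (∀ I : Type, Cardinal.mk I = pseudoIntersectionNumber → ¬ IsCDH (I → G)) := by
  refine ⟨le_antisymm ?_ ?_, fun _ => isCDH_pi_of_mk_lt, fun _ => not_isCDH_pi_of_mk_eq⟩
  · refine le_csInf ⟨_, _, rfl, not_isCDH_pi_of_mk_eq (Cardinal.mk_out _)⟩ ?_
    rintro _ ⟨I, rfl, hI⟩
    exact not_lt.1 fun hlt => hI (isCDH_pi_of_mk_lt hlt)
  · exact csInf_le' ⟨_, Cardinal.mk_out _, not_isCDH_pi_of_mk_eq (Cardinal.mk_out _)⟩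

/-- `𝔭` is the least cardinal `κ` such that `2^κ` is not CDH: `2^κ` is CDH for all
`κ < 𝔭`, and `2^𝔭` is not CDH. -/
theorem p_eq_min_not_CDH :
    pseudoIntersectionNumber =
      sInf {c : Cardinal | ∃ I : Type, Cardinal.mk I = c ∧ ¬ IsCDH (I → Bool)} ∧
    (∀ I : Type, Cardinal.mk I < pseudoIntersectionNumber → IsCDH (I → Bool)) ∧
    (∀ I : Type, Cardinal.mk I = pseudoIntersectionNumber → ¬ IsCDH (I → Bool)) :=
  p_eq_min_not_CDH_general Bool
end
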